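/- arXiv:2308.13107 — 2 statements merged into one kernel-verified Lean document; each statement's English description precedes it below -/
import Mathlib

section
/- Any set of points in the Euclidean plane that spans at most 3 distinct triangles contains at most 6 points. -/
open Real EuclideanGeometry

noncomputable section

/-- The Euclidean plane. -/
abbrev Plane : Type := EuclideanSpace ℝ (Fin 2)

/-- A point of the plane from coordinates. -/
def pt (x y : ℝ) : Plane := (WithLp.equiv 2 (Fin 2 → ℝ)).symm ![x, y]

/-- Two sets of points in the plane are congruent if some isometry of `ℝ²`
maps one onto the other. -/
def Cong (S T : Set Plane) : Prop := ∃ f : Plane ≃ᵢ Plane, f '' S = T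

/-- The collection of unordered triples of pairwise distinct points of `P`. -/
def triplesOf (P : Set Plane) : Set (Set Plane) :=
  {s | ∃ a b c : Plane, a ∈ P ∧ b ∈ P ∧ c ∈ P ∧ a ≠ b ∧ a ≠ c ∧ b ≠ c ∧ s = {a, b, c}}

/-- The number of congruence classes of unordered triples of pairwise distinct
points of `P` (i.e. the number of distinct triangles spanned by `P`),
as an extended natural number. -/
def numTriangles (P : Set Plane) : ℕ∞ :=
  ((fun t => {t' ∈ triplesOf P | Cong t t'}) '' triplesOf P).encard

/-!
Classify triangles by the multiset of their side lengths, and suppose seven points span at most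
three types.  The points other than `v` and `p` form, over each type having a side of length
`dist v p`, at most four triangles `v p q`, because two circles meet in at most two points; so each
distance lies on at least two types.  There are at least three distances: seven points with two
distances would contain an equilateral triangle, and only three further points fit around it.

Two isosceles types with the same legs would leave room for six points only, so around each point
at most `1 + #(legTypes V r)` others lie at distance `r`.  Counting the six neighbours of a point in
this way, and the nine sides of the three types by distance, with isosceles types counted once more
through their legs, shows that all types are isosceles.  Then each distance even lies on all three
types, which needs more than nine sides.
-/

section

open Finset

/-! ### Counting in multisets and Ramsey's theorem -/

section Counting

variable {α : Type*}

theorem exists_monochromatic_triangle {V : Finset α} (hV : 6 ≤ #V)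
    (R : α → α → Prop) :
    ∃ a ∈ V, ∃ b ∈ V, ∃ c ∈ V, a ≠ b ∧ a ≠ c ∧ b ≠ c ∧
      (R a b ∧ R a c ∧ R b c ∨ ¬R a b ∧ ¬R a c ∧ ¬R b c) := by
  classical
  obtain ⟨v, hv⟩ : V.Nonempty := card_pos.1 (by omega)
  have hsplit : #{q ∈ V.erase v | R v q} + #{q ∈ V.erase v | ¬R v q} = #V - 1 :=
    (card_filter_add_card_filter_not _).trans (card_erase_of_mem hv)
  rcases le_or_gt 3 #{q ∈ V.erase v | R v q} with h | h
  · obtain ⟨a, ha, b, hb, c, hc, hab, hac, hbc⟩ := two_lt_card.1 h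
    simp only [mem_filter, mem_erase] at ha hb hc
    grind
  · replace h : 3 ≤ #{q ∈ V.erase v | ¬R v q} := by omega
    obtain ⟨a, ha, b, hb, c, hc, hab, hac, hbc⟩ := two_lt_card.1 h
    simp only [mem_filter, mem_erase] at ha hb hc
    grind

theorem exists_subset_pair_of_card_le_two [DecidableEq α] {D : Finset α} (hne : D.Nonempty)
    (hD : #D ≤ 2) : ∃ s ∈ D, ∃ t ∈ D, D ⊆ {s, t} := by
  have hpos := hne.card_pos
  rcases (by omega : #D = 1 ∨ #D = 2) with h | h
  · obtain ⟨s, rfl⟩ := card_eq_one.1 h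
    exact ⟨s, by simp, s, by simp, by simp⟩
  · obtain ⟨s, t, -, rfl⟩ := card_eq_two.1 h
    exact ⟨s, by simp, t, by simp, Subset.rfl⟩

theorem exists_mem_ne_ne_of_three_le_card {D : Finset α} (hD : 3 ≤ #D) (x y : α) :
    ∃ z ∈ D, z ≠ x ∧ z ≠ y := by
  classical
  obtain ⟨z, hz, hzxy⟩ := exists_mem_notMem_of_card_lt_card (card_le_two.trans_lt hD)
  exact ⟨z, hz, by simpa using hzxy⟩

variable [DecidableEq α]

theorem exists_eq_of_two_le_count {t : Multiset α} {x : α} (hcard : t.card = 3)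
    (ht : 2 ≤ t.count x) : ∃ y, t = {x, x, y} := by
  obtain ⟨u, rfl⟩ := Multiset.le_iff_exists_add.1 (Multiset.le_count_iff_replicate_le.1 ht)
  obtain ⟨y, rfl⟩ : ∃ y, u = {y} := Multiset.card_eq_one.1 (by simpa using hcard)
  exact ⟨y, rfl⟩

theorem sum_count_le_card (D : Finset α) (t : Multiset α) :
    ∑ r ∈ D, t.count r ≤ t.card := by
  calc ∑ r ∈ D, t.count r
      ≤ ∑ r ∈ D ∪ t.toFinset, t.count r := sum_le_sum_of_subset subset_union_left
    _ = t.card := Multiset.sum_count_eq_card fun a ha ↦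
      mem_union_right D (Multiset.mem_toFinset.2 ha)

theorem sum_card_filter_mem_add_le (D : Finset α)
    {T : Finset (Multiset α)} {n : ℕ} (hT : ∀ t ∈ T, t.card = n) :
    ∑ r ∈ D, (#{t ∈ T | r ∈ t} + #{t ∈ T | 2 ≤ t.count r}) ≤ n * #T := by
  have hcount : ∀ (t : Multiset α) (r : α),
      ((if r ∈ t then 1 else 0) + if 2 ≤ t.count r then 1 else 0) ≤ t.count r := by
    intro t r
    have := Multiset.one_le_count_iff_mem (a := r) (s := t)
    split_ifs <;> grind
  calc ∑ r ∈ D, (#{t ∈ T | r ∈ t} + #{t ∈ T | 2 ≤ t.count r})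
      = ∑ r ∈ D, ∑ t ∈ T, ((if r ∈ t then 1 else 0) + if 2 ≤ t.count r then 1 else 0) := by
        simp only [card_filter, sum_add_distrib]
    _ ≤ ∑ r ∈ D, ∑ t ∈ T, t.count r := sum_le_sum fun r _ ↦ sum_le_sum fun t _ ↦ hcount t r
    _ = ∑ t ∈ T, ∑ r ∈ D, t.count r := sum_comm
    _ ≤ ∑ t ∈ T, t.card := sum_le_sum fun t _ ↦ sum_count_le_card D t
    _ = n * #T := by rw [sum_congr rfl hT, sum_const, smul_eq_mul, mul_comm]

theorem sum_card_filter_two_le_count_le (D : Finset α)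
    {T : Finset (Multiset α)} (hT : ∀ t ∈ T, t.card = 3) :
    ∑ r ∈ D, #{t ∈ T | 2 ≤ t.count r} ≤ #{t ∈ T | ¬ t.Nodup} := by
  have hone : ∀ t ∈ T, #{r ∈ D | 2 ≤ t.count r} ≤ if t.Nodup then 0 else 1 := by
    intro t ht
    split_ifs with h
    · rw [nonpos_iff_eq_zero, card_eq_zero, filter_eq_empty_iff]
      exact fun r _ hr ↦ absurd (Multiset.nodup_iff_count_le_one.1 h r) (by omega)
    · refine card_le_one.2 fun r hr s hs ↦ ?_
      by_contra hrs
      have : t.count r + t.count s ≤ t.card := by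
        simpa [sum_pair hrs] using sum_count_le_card {r, s} t
      grind
  calc ∑ r ∈ D, #{t ∈ T | 2 ≤ t.count r} = ∑ t ∈ T, #{r ∈ D | 2 ≤ t.count r} :=
        sum_card_bipartiteAbove_eq_sum_card_bipartiteBelow _
    _ ≤ ∑ t ∈ T, if t.Nodup then 0 else 1 := sum_le_sum hone
    _ = #{t ∈ T | ¬ t.Nodup} := by simp [card_filter]

end Counting

/-! ### Side lengths of triangles -/

section SideLengths

variable {X : Type*} [PseudoMetricSpace X]

/-- The side lengths of the triangle `abc`, as a multiset so that the order of the vertices is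
forgotten. -/
def sideLengths (a b c : X) : Multiset ℝ := {dist a b, dist a c, dist b c}

theorem sideLengths_swap_left (a b c : X) : sideLengths b a c = sideLengths a b c := by
  simp only [sideLengths, dist_comm b a, Multiset.insert_eq_cons, Multiset.pair_comm (dist a c)]

theorem sideLengths_swap_right (a b c : X) : sideLengths a c b = sideLengths a b c := by
  simp only [sideLengths, dist_comm c b, Multiset.insert_eq_cons, Multiset.cons_swap (dist a b)]

theorem sideLengths_eq_of_subset {a b c a' b' c' : X} (hab : a' ≠ b') (hac : a' ≠ c')
    (hbc : b' ≠ c') (h : ({a', b', c'} : Set X) ⊆ {a, b, c}) :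
    sideLengths a' b' c' = sideLengths a b c := by
  simp only [Set.insert_subset_iff, Set.singleton_subset_iff, Set.mem_insert_iff,
    Set.mem_singleton_iff] at h
  obtain ⟨rfl | rfl | rfl, rfl | rfl | rfl, rfl | rfl | rfl⟩ := h
  all_goals first | contradiction | grind [sideLengths_swap_left, sideLengths_swap_right]

theorem sideLengths_map_of_isometry {Y : Type*} [PseudoMetricSpace Y] {f : X → Y} (hf : Isometry f)
    (a b c : X) : sideLengths (f a) (f b) (f c) = sideLengths a b c := by
  simp only [sideLengths, hf.dist_eq]

theorem mem_sideLengths {a b c : X} {r : ℝ} :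
    r ∈ sideLengths a b c ↔ r = dist a b ∨ r = dist a c ∨ r = dist b c := by
  simp [sideLengths]

theorem sideLengths_eq_iff {a b c : X} {y z : ℝ} :
    sideLengths a b c = {dist a b, y, z} ↔
      dist a c = y ∧ dist b c = z ∨ dist a c = z ∧ dist b c = y := by
  rw [sideLengths, Multiset.insert_eq_cons, Multiset.insert_eq_cons (dist a b),
    Multiset.cons_inj_right, Multiset.insert_eq_cons, Multiset.insert_eq_cons,
    Multiset.cons_eq_cons]
  simp only [Multiset.singleton_inj, Multiset.singleton_eq_cons_iff]
  grind

end SideLengths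

section Types

variable {X : Type*} [PseudoMetricSpace X] {V W : Finset X}

open Classical in
/-- The distances between distinct points of `V`. -/
def distances (V : Finset X) : Finset ℝ := V.offDiag.image fun p ↦ dist p.1 p.2

open Classical in
/-- The multisets of side lengths of the triangles spanned by `V`.  By side-side-side, in the plane
they correspond to the congruence classes of these triangles. -/
def triangleTypes (V : Finset X) : Finset (Multiset ℝ) :=
  {x ∈ V ×ˢ V ×ˢ V | x.1 ≠ x.2.1 ∧ x.1 ≠ x.2.2 ∧ x.2.1 ≠ x.2.2}.image
    fun x ↦ sideLengths x.1 x.2.1 x.2.2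

/-- The types of the isosceles triangles spanned by `V` whose legs have length `r`; equilateral
triangles of side `r` are included. -/
def legTypes (V : Finset X) (r : ℝ) : Finset (Multiset ℝ) :=
  {t ∈ triangleTypes V | 2 ≤ t.count r}

/-- Each distance of `V` is a side length of all triangle types of `V` but at most one: the property
of configurations with few triangle types and many points that drives the argument. -/
def DistancesMissAtMostOne (V : Finset X) : Prop :=
  ∀ r ∈ distances V, #{t ∈ triangleTypes V | r ∉ t} ≤ 1

theorem mem_distances {r : ℝ} :
    r ∈ distances V ↔ ∃ a ∈ V, ∃ b ∈ V, a ≠ b ∧ dist a b = r := by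
  simp only [distances, mem_image, mem_offDiag, Prod.exists]
  grind

theorem dist_mem_distances {a b : X} (ha : a ∈ V) (hb : b ∈ V) (hab : a ≠ b) :
    dist a b ∈ distances V :=
  mem_distances.2 ⟨a, ha, b, hb, hab, rfl⟩

theorem mem_triangleTypes {t : Multiset ℝ} :
    t ∈ triangleTypes V ↔
      ∃ a ∈ V, ∃ b ∈ V, ∃ c ∈ V, a ≠ b ∧ a ≠ c ∧ b ≠ c ∧ sideLengths a b c = t := by
  simp only [triangleTypes, mem_image, mem_filter, mem_product, Prod.exists]
  grind

theorem sideLengths_mem_triangleTypes {a b c : X} (ha : a ∈ V) (hb : b ∈ V)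
    (hc : c ∈ V) (hab : a ≠ b) (hac : a ≠ c) (hbc : b ≠ c) :
    sideLengths a b c ∈ triangleTypes V :=
  mem_triangleTypes.2 ⟨a, ha, b, hb, c, hc, hab, hac, hbc, rfl⟩

theorem card_eq_three_of_mem_triangleTypes {t : Multiset ℝ}
    (ht : t ∈ triangleTypes V) : t.card = 3 := by
  obtain ⟨a, -, b, -, c, -, -, -, -, rfl⟩ := mem_triangleTypes.1 ht
  rfl

theorem mem_distances_of_mem_triangleTypes {t : Multiset ℝ}
    (ht : t ∈ triangleTypes V) {r : ℝ} (hr : r ∈ t) : r ∈ distances V := by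
  obtain ⟨a, ha, b, hb, c, hc, hab, hac, hbc, rfl⟩ := mem_triangleTypes.1 ht
  rcases mem_sideLengths.1 hr with rfl | rfl | rfl
  exacts [dist_mem_distances ha hb hab, dist_mem_distances ha hc hac, dist_mem_distances hb hc hbc]

theorem triangleTypes_mono (hVW : V ⊆ W) : triangleTypes V ⊆ triangleTypes W := by
  intro t ht
  obtain ⟨a, ha, b, hb, c, hc, hab, hac, hbc, rfl⟩ := mem_triangleTypes.1 ht
  exact sideLengths_mem_triangleTypes (hVW ha) (hVW hb) (hVW hc) hab hac hbc

theorem sideLengths_mem_legTypes {r : ℝ} (hr : r ≠ 0) {v p q : X} (hv : v ∈ V) (hp : p ∈ V)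
    (hq : q ∈ V) (hpq : p ≠ q) (hvp : dist v p = r) (hvq : dist v q = r) :
    sideLengths v p q ∈ legTypes V r := by
  have hne : ∀ w, dist v w = r → v ≠ w := fun w hw h ↦ hr (by rw [← hw, h, dist_self])
  refine mem_filter.2 ⟨sideLengths_mem_triangleTypes hv hp hq (hne p hvp) (hne q hvq) hpq, ?_⟩
  simp [sideLengths, hvp, hvq]

theorem DistancesMissAtMostOne.eq_of_notMem (hV : DistancesMissAtMostOne V) {r : ℝ}
    (hr : r ∈ distances V) {t u : Multiset ℝ} (ht : t ∈ triangleTypes V)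
    (hu : u ∈ triangleTypes V) (hrt : r ∉ t) (hru : r ∉ u) : t = u :=
  card_le_one.1 (hV r hr) t (mem_filter.2 ⟨ht, hrt⟩) u (mem_filter.2 ⟨hu, hru⟩)

theorem card_le_one_add_sum_card_filter_dist_eq {v : X} (hv : v ∈ V) :
    #V ≤ 1 + ∑ r ∈ distances V, #{q ∈ V | dist v q = r} := by
  classical
  have hmaps : ∀ q ∈ V.erase v, dist v q ∈ distances V := fun q hq ↦
    dist_mem_distances hv (mem_of_mem_erase hq) (ne_of_mem_erase hq).symm
  calc #V = 1 + #(V.erase v) := by rw [add_comm, card_erase_add_one hv]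
    _ = 1 + ∑ r ∈ distances V, #{q ∈ V.erase v | dist v q = r} := by
      rw [card_eq_sum_card_fiberwise hmaps]
    _ ≤ 1 + ∑ r ∈ distances V, #{q ∈ V | dist v q = r} := by
      gcongr
      exact erase_subset _ _

theorem card_le_two_add_mul_card_filter_mem {p v : X} (hp : p ∈ V)
    (hv : v ∈ V) (hpv : v ≠ p) {n : ℕ}
    (hfibre : ∀ y z, ({dist v p, y, z} : Multiset ℝ) ∈ triangleTypes V →
      #{q ∈ V | dist v q = y ∧ dist p q = z ∨ dist v q = z ∧ dist p q = y} ≤ n) :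
    #V ≤ 2 + n * #{t ∈ triangleTypes V | dist v p ∈ t} := by
  classical
  let W := (V.erase v).erase p
  have hW : ∀ q, q ∈ W ↔ q ≠ p ∧ q ≠ v ∧ q ∈ V := by simp [W]
  have hmap : ∀ q ∈ W, sideLengths v p q ∈ ({t ∈ triangleTypes V | dist v p ∈ t} : Finset _) := by
    intro q hq
    obtain ⟨hqp, hqv, hqV⟩ := (hW q).1 hq
    exact mem_filter.2 ⟨sideLengths_mem_triangleTypes hv hp hqV hpv hqv.symm hqp.symm,
      mem_sideLengths.2 (.inl rfl)⟩
  have hcard : #V = 2 + #W := by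
    rw [card_erase_of_mem (mem_erase.2 ⟨hpv.symm, hp⟩), card_erase_of_mem hv]
    have := one_lt_card.2 ⟨p, hp, v, hv, hpv.symm⟩
    omega
  rw [hcard]
  refine Nat.add_le_add_left (card_le_mul_card_image_of_maps_to hmap n fun t ht ↦ ?_) 2
  obtain ⟨htV, hvp⟩ := mem_filter.1 ht
  obtain ⟨y, z, rfl⟩ : ∃ y z, t = {dist v p, y, z} := by
    obtain ⟨u, rfl⟩ := Multiset.exists_cons_of_mem hvp
    have hu : u.card = 2 := by simpa using card_eq_three_of_mem_triangleTypes htV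
    obtain ⟨y, z, rfl⟩ := Multiset.card_eq_two.1 hu
    exact ⟨y, z, rfl⟩
  refine (card_le_card fun q hq ↦ ?_).trans (hfibre y z htV)
  rw [mem_filter] at hq ⊢
  exact ⟨((hW q).1 hq.1).2.2, sideLengths_eq_iff.1 hq.2⟩

theorem mul_card_distances_add_sum_card_legTypes_le {n : ℕ}
    (hn : ∀ v ∈ V, ∀ p ∈ V, v ≠ p → n ≤ #{t ∈ triangleTypes V | dist v p ∈ t}) :
    n * #(distances V) + ∑ r ∈ distances V, #(legTypes V r) ≤ 3 * #(triangleTypes V) := by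
  have hn' : ∀ r ∈ distances V, n ≤ #{t ∈ triangleTypes V | r ∈ t} := by
    intro r hr
    obtain ⟨v, hv, p, hp, hvp, rfl⟩ := mem_distances.1 hr
    exact hn v hv p hp hvp
  calc n * #(distances V) + ∑ r ∈ distances V, #(legTypes V r)
      ≤ ∑ r ∈ distances V, #{t ∈ triangleTypes V | r ∈ t} + ∑ r ∈ distances V, #(legTypes V r) := by
        gcongr
        rw [mul_comm]
        exact card_nsmul_le_sum _ _ _ hn'
    _ = ∑ r ∈ distances V, (#{t ∈ triangleTypes V | r ∈ t} + #(legTypes V r)) :=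
        sum_add_distrib.symm
    _ ≤ 3 * #(triangleTypes V) :=
        sum_card_filter_mem_add_le _ fun _ ↦ card_eq_three_of_mem_triangleTypes

theorem not_nodup_of_card_le_sum_card_legTypes
    (h : #(triangleTypes V) ≤ ∑ r ∈ distances V, #(legTypes V r)) :
    ∀ t ∈ triangleTypes V, ¬t.Nodup :=
  filter_card_eq <| (card_filter_le _ _).antisymm <| h.trans <|
    sum_card_filter_two_le_count_le _ fun _ ↦ card_eq_three_of_mem_triangleTypes

theorem pos_of_mem_distances {X : Type*} [MetricSpace X] {V : Finset X} {r : ℝ}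
    (hr : r ∈ distances V) : 0 < r := by
  obtain ⟨a, -, b, -, hab, rfl⟩ := mem_distances.1 hr
  exact dist_pos.2 hab

end Types

/-! ### Points of the plane at prescribed distances -/

section PlaneGeometry

theorem card_filter_dist_eq_and_dist_eq_le_two (V : Finset Plane) {u v : Plane} (huv : u ≠ v)
    (r s : ℝ) : #{q ∈ V | dist u q = r ∧ dist v q = s} ≤ 2 := by
  by_contra! h
  obtain ⟨p, hp, q, hq, w, hw, hpq, hpw, hqw⟩ := two_lt_card.1 h
  simp only [mem_filter, dist_comm u, dist_comm v] at hp hq hw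
  rcases eq_of_dist_eq_of_dist_eq_of_finrank_eq_two (by simp) huv hpq
    hp.2.1 hq.2.1 hw.2.1 hp.2.2 hq.2.2 hw.2.2 with rfl | rfl
  exacts [hpw rfl, hqw rfl]

theorem card_le_two_of_dist_eq {A B : Finset Plane} {r : ℝ}
    (hAB : ∀ a ∈ A, ∀ b ∈ B, dist a b = r) (hA : 2 ≤ #A) : #B ≤ 2 := by
  obtain ⟨u, hu, v, hv, huv⟩ := one_lt_card.1 hA
  calc #B = #{q ∈ B | dist u q = r ∧ dist v q = r} := by
        rw [filter_true_of_mem fun q hq ↦ ⟨hAB u hu q hq, hAB v hv q hq⟩]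
    _ ≤ 2 := card_filter_dist_eq_and_dist_eq_le_two B huv r r

theorem dist_sq_eq_add_sq (p q : Plane) : dist p q ^ 2 = (p 0 - q 0) ^ 2 + (p 1 - q 1) ^ 2 := by
  rw [EuclideanSpace.dist_eq, sq_sqrt (by positivity), Fin.sum_univ_two, Real.dist_eq,
    Real.dist_eq, sq_abs, sq_abs]

/-- The determinant of the Gram matrix of `a - p`, `b - p`, `c - p`, in which
`2 * inner (a - p) (b - p) = dist p a ^ 2 + dist p b ^ 2 - dist a b ^ 2`. -/
theorem gram_det_eq_zero (p a b c : Plane) :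
    4 * dist p a ^ 2 * dist p b ^ 2 * dist p c ^ 2
      + (dist p a ^ 2 + dist p b ^ 2 - dist a b ^ 2) * (dist p a ^ 2 + dist p c ^ 2 - dist a c ^ 2)
        * (dist p b ^ 2 + dist p c ^ 2 - dist b c ^ 2)
      - dist p a ^ 2 * (dist p b ^ 2 + dist p c ^ 2 - dist b c ^ 2) ^ 2
      - dist p b ^ 2 * (dist p a ^ 2 + dist p c ^ 2 - dist a c ^ 2) ^ 2
      - dist p c ^ 2 * (dist p a ^ 2 + dist p b ^ 2 - dist a b ^ 2) ^ 2 = 0 := by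
  simp only [dist_sq_eq_add_sq]
  ring

section Equilateral

variable {a b c : Plane} {s : ℝ} (hs : 0 < s) (hab : dist a b = s) (hac : dist a c = s)
  (hbc : dist b c = s)
include hs hab hac hbc

theorem sum_dist_pow_four_of_equilateral (p : Plane) :
    3 * (s ^ 4 + dist p a ^ 4 + dist p b ^ 4 + dist p c ^ 4) =
      (s ^ 2 + dist p a ^ 2 + dist p b ^ 2 + dist p c ^ 2) ^ 2 := by
  have hgram := gram_det_eq_zero p a b c
  rw [hab, hac, hbc] at hgram
  have hs2 : s ^ 2 ≠ 0 := by positivity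
  apply mul_left_cancel₀ hs2
  linear_combination -2 * hgram

theorem eq_of_dist_eq_of_equilateral {p q : Plane} (ha : dist p a = dist q a)
    (hb : dist p b = dist q b) (hc : dist p c = dist q c) : p = q := by
  by_contra hpq
  have hbisector : Collinear ℝ (AffineSubspace.perpBisector p q : Set Plane) := by
    have : Fact (Module.finrank ℝ Plane = 1 + 1) := ⟨by simp⟩
    rw [collinear_iff_finrank_le_one, ← direction_affineSpan, AffineSubspace.affineSpan_coe,
      AffineSubspace.direction_perpBisector, Submodule.finrank_orthogonal_span_singleton (n := 1)]
    simpa only [vsub_eq_sub, ne_eq, sub_eq_zero] using Ne.symm hpq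
  have habc : Collinear ℝ {a, b, c} := hbisector.subset (by
    simp [Set.insert_subset_iff, AffineSubspace.mem_perpBisector_iff_dist_eq', *])
  rcases habc.wbtw_or_wbtw_or_wbtw with h | h | h
  all_goals
    have := h.dist_add_dist
    simp only [dist_comm b a, dist_comm c a, dist_comm c b, hab, hac, hbc] at this
    linarith

theorem exists_dist_ne_of_equilateral (p : Plane) :
    dist p a ≠ s ∨ dist p b ≠ s ∨ dist p c ≠ s := by
  by_contra! hp
  have hrel := sum_dist_pow_four_of_equilateral hs hab hac hbc p
  rw [hp.1, hp.2.1, hp.2.2] at hrel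
  have : 0 < s ^ 4 := by positivity
  linarith

end Equilateral

/-- The two hypotheses are `sum_dist_pow_four_of_equilateral` for points of which `k`, resp. `l`, of
the distances to the vertices equal `t` and the others equal `s`. -/
theorem eq_of_equilateral_relation {s t : ℝ} (hs : 0 < s) (ht : 0 < t) {k l : ℕ}
    (hk3 : k ≤ 3) (hl3 : l ≤ 3)
    (hk : 3 * (s ^ 4 + ((3 - k) * s ^ 4 + k * t ^ 4)) =
      (s ^ 2 + ((3 - k) * s ^ 2 + k * t ^ 2)) ^ 2)
    (hl : 3 * (s ^ 4 + ((3 - l) * s ^ 4 + l * t ^ 4)) =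
      (s ^ 2 + ((3 - l) * s ^ 2 + l * t ^ 2)) ^ 2) :
    k = l := by
  have hs2 : 0 < s ^ 2 := by positivity
  have ht2 : 0 < t ^ 2 := by positivity
  rw [show s ^ 4 = (s ^ 2) ^ 2 by ring, show t ^ 4 = (t ^ 2) ^ 2 by ring] at hk hl
  generalize s ^ 2 = S at *
  generalize t ^ 2 = T at *
  have hss : 0 < S * S := by positivity
  have hst : 0 < S * T := by positivity
  have htt : 0 < T * T := by positivity
  interval_cases k <;> interval_cases l <;> first | rfl | (exfalso; push_cast at hk hl; nlinarith)

theorem card_le_three_of_two_distances_to_equilateral {Δ : Fin 3 → Plane} {s t : ℝ}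
    (hs : 0 < s) (ht : 0 < t) (hΔ : Pairwise fun i j ↦ dist (Δ i) (Δ j) = s) {W : Finset Plane}
    (hW : ∀ p ∈ W, ∀ i, dist p (Δ i) = s ∨ dist p (Δ i) = t) : #W ≤ 3 := by
  let pattern (p : Plane) : Finset (Fin 3) := {i | dist p (Δ i) = t}
  have h01 : dist (Δ 0) (Δ 1) = s := hΔ (by decide)
  have h02 : dist (Δ 0) (Δ 2) = s := hΔ (by decide)
  have h12 : dist (Δ 1) (Δ 2) = s := hΔ (by decide)
  have hdist : ∀ p ∈ W, ∀ i, dist p (Δ i) = if i ∈ pattern p then t else s := by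
    intro p hp i
    have := hW p hp i
    grind
  have hsum : ∀ p ∈ W, ∀ n, ∑ i, dist p (Δ i) ^ n =
      (3 - #(pattern p)) * s ^ n + #(pattern p) * t ^ n := by
    intro p hp n
    have hcompl : ((#(pattern p)ᶜ : ℕ) : ℝ) = 3 - #(pattern p) := by
      rw [card_compl, Fintype.card_fin, Nat.cast_sub (card_finset_fin_le _), Nat.cast_ofNat]
    simp_rw [hdist p hp, ite_pow]
    rw [sum_ite, filter_not, filter_univ_mem, ← compl_eq_univ_sdiff, sum_const, sum_const,
      nsmul_eq_mul, nsmul_eq_mul, hcompl, add_comm]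
  have hrel (p : Plane) :
      3 * (s ^ 4 + ∑ i, dist p (Δ i) ^ 4) = (s ^ 2 + ∑ i, dist p (Δ i) ^ 2) ^ 2 := by
    simpa only [Fin.sum_univ_three, add_assoc] using
      sum_dist_pow_four_of_equilateral hs h01 h02 h12 p
  have hpattern : ∀ p ∈ W, ∀ q ∈ W, #(pattern p) = #(pattern q) := fun p hp q hq ↦
    eq_of_equilateral_relation hs ht (card_finset_fin_le _) (card_finset_fin_le _)
      (by simpa only [hsum p hp] using hrel p) (by simpa only [hsum q hq] using hrel q)
  have hinj : Set.InjOn pattern W := fun p hp q hq hpq ↦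
    eq_of_dist_eq_of_equilateral hs h01 h02 h12 (by simp only [hdist p hp, hdist q hq, hpq])
      (by simp only [hdist p hp, hdist q hq, hpq]) (by simp only [hdist p hp, hdist q hq, hpq])
  obtain rfl | ⟨q, hq⟩ := W.eq_empty_or_nonempty
  · simp
  calc #W ≤ #(powersetCard #(pattern q) (univ : Finset (Fin 3))) :=
        card_le_card_of_injOn pattern
          (fun p hp ↦ mem_powersetCard.2 ⟨subset_univ _, hpattern p hp q hq⟩) hinj
    _ = Nat.choose 3 #(pattern q) := by rw [card_powersetCard, card_univ, Fintype.card_fin]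
    _ ≤ Nat.choose 3 (3 / 2) := Nat.choose_le_middle _ 3

variable {V : Finset Plane}

theorem card_le_six_of_equilateral_of_two_distances {a b c : Plane} {s t : ℝ} (hs : 0 < s)
    (ht : 0 < t) (ha : a ∈ V) (hb : b ∈ V) (hc : c ∈ V) (hab : dist a b = s)
    (hac : dist a c = s) (hbc : dist b c = s)
    (hV : ∀ p ∈ V, ∀ q ∈ V, p ≠ q → dist p q = s ∨ dist p q = t) : #V ≤ 6 := by
  classical
  have hΔ : Pairwise fun i j ↦ dist (![a, b, c] i) (![a, b, c] j) = s := by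
    intro i j hij
    fin_cases i <;> fin_cases j <;> simp_all [dist_comm]
  have hrest : #(V \ {a, b, c}) ≤ 3 := by
    refine card_le_three_of_two_distances_to_equilateral hs ht hΔ fun p hp i ↦ ?_
    simp only [mem_sdiff, mem_insert, mem_singleton, not_or] at hp
    fin_cases i
    exacts [hV p hp.1 a ha hp.2.1, hV p hp.1 b hb hp.2.2.1, hV p hp.1 c hc hp.2.2.2]
  calc #V ≤ #(V \ {a, b, c}) + #{a, b, c} := card_le_card_sdiff_add_card
    _ ≤ 3 + 3 := Nat.add_le_add hrest card_le_three

theorem card_le_six_of_two_distances {s t : ℝ} (hs : 0 < s) (ht : 0 < t)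
    (hV : ∀ p ∈ V, ∀ q ∈ V, p ≠ q → dist p q = s ∨ dist p q = t) : #V ≤ 6 := by
  by_contra! hV7
  obtain ⟨a, ha, b, hb, c, hc, hab, hac, hbc, h | h⟩ :=
    exists_monochromatic_triangle hV7.le (fun p q ↦ dist p q = s)
  · exact hV7.not_ge
      (card_le_six_of_equilateral_of_two_distances hs ht ha hb hc h.1 h.2.1 h.2.2 hV)
  · exact hV7.not_ge (card_le_six_of_equilateral_of_two_distances ht hs ha hb hc
      ((hV a ha b hb hab).resolve_left h.1) ((hV a ha c hc hac).resolve_left h.2.1)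
      ((hV b hb c hc hbc).resolve_left h.2.2) fun p hp q hq hpq ↦ (hV p hp q hq hpq).symm)

theorem three_le_card_distances (hV : 7 ≤ #V) : 3 ≤ #(distances V) := by
  by_contra! hD
  obtain ⟨a, ha, b, hb, hab⟩ := one_lt_card.1 (by omega : 1 < #V)
  obtain ⟨s, hs, t, ht, hst⟩ := exists_subset_pair_of_card_le_two
    ⟨_, dist_mem_distances ha hb hab⟩ (Nat.le_of_lt_succ hD)
  have hV6 := card_le_six_of_two_distances (pos_of_mem_distances hs) (pos_of_mem_distances ht)
    fun p hp q hq hpq ↦ by simpa using hst (dist_mem_distances hp hq hpq)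
  omega

end PlaneGeometry

/-! ### Isosceles types with the same legs -/

section Legs

variable {X : Type*} [PseudoMetricSpace X] {V : Finset X} {x y z : ℝ}

theorem card_le_five_of_two_distances_of_no_equilateral
    (hV : ∀ p ∈ V, ∀ q ∈ V, p ≠ q → dist p q = y ∨ dist p q = z)
    (hequi : ∀ r, {r, r, r} ∉ triangleTypes V) : #V ≤ 5 := by
  have hno : ∀ r, ∀ a ∈ V, ∀ b ∈ V, ∀ c ∈ V, a ≠ b → a ≠ c → b ≠ c →
      dist a b = r → dist a c = r → dist b c ≠ r := fun r a ha b hb c hc hab hac hbc h₁ h₂ h₃ ↦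
    hequi r (mem_triangleTypes.2
      ⟨a, ha, b, hb, c, hc, hab, hac, hbc, by rw [sideLengths, h₁, h₂, h₃]⟩)
  by_contra! hV6
  obtain ⟨a, ha, b, hb, c, hc, hab, hac, hbc, h | h⟩ :=
    exists_monochromatic_triangle hV6 (fun p q ↦ dist p q = y)
  · exact hno y a ha b hb c hc hab hac hbc h.1 h.2.1 h.2.2
  · exact hno z a ha b hb c hc hab hac hbc ((hV a ha b hb hab).resolve_left h.1)
      ((hV a ha c hc hac).resolve_left h.2.1) ((hV b hb c hc hbc).resolve_left h.2.2)

theorem card_le_five_of_forall_dist_ne (hxyz : ∀ r ∈ distances V, r = x ∨ r = y ∨ r = z)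
    (hequi : ∀ r, {r, r, r} ∉ triangleTypes V) {S : Finset X} (hS : S ⊆ V)
    (hSx : ∀ p ∈ S, ∀ q ∈ S, p ≠ q → dist p q ≠ x) : #S ≤ 5 :=
  card_le_five_of_two_distances_of_no_equilateral
    (fun p hp q hq hpq ↦ (hxyz _ (dist_mem_distances (hS hp) (hS hq) hpq)).resolve_left
      (hSx p hp q hq hpq))
    fun r hr ↦ hequi r (triangleTypes_mono hS hr)

theorem dist_ne_trans_of_count_ne_one (hcount : ∀ t ∈ triangleTypes V, t.count x ≠ 1) {p q r : X}
    (hp : p ∈ V) (hq : q ∈ V) (hr : r ∈ V) (hpr : p ≠ r) (hpqx : dist p q ≠ x)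
    (hqrx : dist q r ≠ x) : dist p r ≠ x := by
  obtain rfl | hpq := eq_or_ne p q
  · exact hqrx
  obtain rfl | hqr := eq_or_ne q r
  · exact hpqx
  intro hprx
  refine hcount _ (sideLengths_mem_triangleTypes hp hq hr hpq hpr hqr) ?_
  simp [sideLengths, hprx, hpqx.symm, hqrx.symm]

section TwoTypes

variable (hmiss : DistancesMissAtMostOne V) (hy : {x, x, y} ∈ triangleTypes V)
  (hz : {x, x, z} ∈ triangleTypes V) (hyz : y ≠ z)
include hmiss hy hz hyz

theorem eq_or_eq_or_eq_of_mem_distances {r : ℝ} (hr : r ∈ distances V) :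
    r = x ∨ r = y ∨ r = z := by
  by_contra! h
  have := hmiss.eq_of_notMem hr hy hz (by simp [h]) (by simp [h])
  simp [hyz] at this

theorem base_ne_leg (hD : 3 ≤ #(distances V)) : y ≠ x := by
  rintro rfl
  obtain ⟨r, hr, hry, hrz⟩ := exists_mem_ne_ne_of_three_le_card hD y z
  rcases eq_or_eq_or_eq_of_mem_distances hmiss hy hz hyz hr with h | h | h <;> contradiction

theorem base_mem_of_ne (hD : 3 ≤ #(distances V)) {t : Multiset ℝ} (ht : t ∈ triangleTypes V)
    (hty : t ≠ {x, x, y}) : z ∈ t := by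
  have hzx := base_ne_leg hmiss hz hy hyz.symm hD
  by_contra hzt
  exact hty <| hmiss.eq_of_notMem (mem_distances_of_mem_triangleTypes hz (by simp)) ht hy hzt
    (by simp [hzx, hyz.symm])

theorem equilateral_notMem_triangleTypes (hD : 3 ≤ #(distances V)) (r : ℝ) :
    {r, r, r} ∉ triangleTypes V := by
  intro hr
  have heq : ∀ w ∈ ({r, r, r} : Multiset ℝ), w = r := by simp
  have hne : ∀ w, w ≠ x → ({r, r, r} : Multiset ℝ) ≠ {x, x, w} := fun w hw h ↦
    hw ((heq w (h ▸ by simp)).trans (heq x (h ▸ by simp)).symm)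
  have hzr := base_mem_of_ne hmiss hy hz hyz hD hr (hne y (base_ne_leg hmiss hy hz hyz hD))
  have hyr := base_mem_of_ne hmiss hz hy hyz.symm hD hr
    (hne z (base_ne_leg hmiss hz hy hyz.symm hD))
  exact hyz ((heq y hyr).trans (heq z hzr).symm)

end TwoTypes

theorem count_ne_one_of_two_le_card_legTypes (hT : #(triangleTypes V) ≤ 3)
    (hlegs : 2 ≤ #(legTypes V x)) {t₀ : Multiset ℝ} (ht₀ : t₀ ∈ triangleTypes V) (hx : x ∉ t₀)
    {t : Multiset ℝ} (ht : t ∈ triangleTypes V) : t.count x ≠ 1 := by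
  classical
  intro hcount
  have hne : t₀ ≠ t := by
    rintro rfl
    exact hx (Multiset.one_le_count_iff_mem.1 hcount.ge)
  have hsub : legTypes V x ⊆ ((triangleTypes V).erase t).erase t₀ := by
    intro u hu
    obtain ⟨huV, hu⟩ := mem_filter.1 hu
    refine mem_erase.2 ⟨?_, mem_erase.2 ⟨?_, huV⟩⟩
    · rintro rfl
      rw [Multiset.count_eq_zero.2 hx] at hu
      omega
    · rintro rfl
      omega
  have hle := card_le_card hsub
  rw [card_erase_of_mem (mem_erase.2 ⟨hne, ht₀⟩), card_erase_of_mem ht] at hle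
  omega

end Legs

section PlaneLegs

variable {V : Finset Plane} {x : ℝ}

/-- No triangle has exactly one side `x`, so being at a distance other than `x` is transitive; hence
all distances between the class of a point and its complement are `x`. -/
theorem card_le_six_of_count_ne_one {y z : ℝ} (hx : x ≠ 0)
    (hxyz : ∀ r ∈ distances V, r = x ∨ r = y ∨ r = z)
    (hequi : ∀ r, {r, r, r} ∉ triangleTypes V) (hcount : ∀ t ∈ triangleTypes V, t.count x ≠ 1) :
    #V ≤ 6 := by
  obtain rfl | ⟨v, hv⟩ := V.eq_empty_or_nonempty
  · simp
  let N : Finset Plane := {q ∈ V | dist v q = x}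
  let M : Finset Plane := {q ∈ V | dist v q ≠ x}
  have hN : ∀ q, q ∈ N ↔ q ∈ V ∧ dist v q = x := fun q ↦ mem_filter
  have hM : ∀ q, q ∈ M ↔ q ∈ V ∧ dist v q ≠ x := fun q ↦ mem_filter
  have hNV : #N + #M = #V := card_filter_add_card_filter_not _
  have hN5 : #N ≤ 5 := by
    refine card_le_five_of_forall_dist_ne hxyz hequi (filter_subset _ _)
      fun p hp q hq hpq hpqx ↦ hequi x ?_
    rw [hN] at hp hq
    have := (mem_filter.1 (sideLengths_mem_legTypes hx hv hp.1 hq.1 hpq hp.2 hq.2)).1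
    rwa [sideLengths, hp.2, hq.2, hpqx] at this
  have hM5 : #M ≤ 5 := by
    refine card_le_five_of_forall_dist_ne hxyz hequi (filter_subset _ _) fun p hp q hq hpq ↦ ?_
    rw [hM] at hp hq
    exact dist_ne_trans_of_count_ne_one hcount hp.1 hv hq.1 hpq (by rw [dist_comm]; exact hp.2) hq.2
  have hMN : ∀ a ∈ M, ∀ b ∈ N, dist a b = x := by
    intro a ha b hb
    rw [hM] at ha
    rw [hN] at hb
    by_contra hab
    have hvb : v ≠ b := fun h ↦ hx (by rw [← hb.2, h, dist_self])
    exact dist_ne_trans_of_count_ne_one hcount hv ha.1 hb.1 hvb ha.2 hab hb.2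
  have hN2 := card_le_two_of_dist_eq hMN
  have hM2 := card_le_two_of_dist_eq fun b hb a ha ↦ (dist_comm b a).trans (hMN a ha b hb)
  omega

theorem card_le_six_of_two_le_card_legTypes (hT : #(triangleTypes V) ≤ 3)
    (hmiss : DistancesMissAtMostOne V) (hD : 3 ≤ #(distances V)) (hlegs : 2 ≤ #(legTypes V x)) :
    #V ≤ 6 := by
  obtain ⟨t, ht, u, hu, htu⟩ := one_lt_card.1 hlegs
  obtain ⟨htV, ht⟩ := mem_filter.1 ht
  obtain ⟨huV, hu⟩ := mem_filter.1 hu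
  obtain ⟨y, rfl⟩ := exists_eq_of_two_le_count (card_eq_three_of_mem_triangleTypes htV) ht
  obtain ⟨z, rfl⟩ := exists_eq_of_two_le_count (card_eq_three_of_mem_triangleTypes huV) hu
  have hyz : y ≠ z := fun h ↦ htu (by rw [h])
  have hx : 0 < x := pos_of_mem_distances (mem_distances_of_mem_triangleTypes htV (by simp))
  have hequi := equilateral_notMem_triangleTypes hmiss htV huV hyz hD
  by_contra! hV
  obtain ⟨a, ha, b, hb, c, hc, hab, hac, hbc, h | h⟩ :=
    exists_monochromatic_triangle hV.le (fun p q ↦ dist p q = x)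
  · refine hequi x (mem_triangleTypes.2 ⟨a, ha, b, hb, c, hc, hab, hac, hbc, ?_⟩)
    rw [sideLengths, h.1, h.2.1, h.2.2]
  · have hx_notMem : x ∉ sideLengths a b c := by
      simpa only [mem_sideLengths, eq_comm (a := x), not_or] using h
    exact hV.not_ge (card_le_six_of_count_ne_one hx.ne'
      (fun r ↦ eq_or_eq_or_eq_of_mem_distances hmiss htV huV hyz) hequi
      fun t ↦ count_ne_one_of_two_le_card_legTypes hT hlegs
        (sideLengths_mem_triangleTypes ha hb hc hab hac hbc) hx_notMem)

end PlaneLegs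

/-! ### Neighbours of a point and of an edge -/

section Degrees

variable {V : Finset Plane} {x : ℝ}

theorem card_filter_dist_eq_le_two (hmiss : DistancesMissAtMostOne V) (hD : 3 ≤ #(distances V))
    (hlegs : #(legTypes V x) ≤ 1) (hx : 0 < x) {v : Plane} (hv : v ∈ V) :
    #{q ∈ V | dist v q = x} ≤ 2 := by
  by_contra! h
  obtain ⟨p, hp, q, hq, r, hr, hpq, hpr, hqr⟩ := two_lt_card.1 h
  simp only [mem_filter] at hp hq hr
  have hbase : ∀ a ∈ V, ∀ b ∈ V, ∀ c ∈ V, ∀ d ∈ V, a ≠ b → c ≠ d → dist v a = x → dist v b = x →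
      dist v c = x → dist v d = x → dist a b = dist c d := by
    intro a ha b hb c hc d hd hab hcd hva hvb hvc hvd
    have := card_le_one.1 hlegs _ (sideLengths_mem_legTypes hx.ne' hv ha hb hab hva hvb)
      _ (sideLengths_mem_legTypes hx.ne' hv hc hd hcd hvc hvd)
    simpa [sideLengths, *] using this
  have hprq : dist p r = dist p q :=
    hbase p hp.1 r hr.1 p hp.1 q hq.1 hpr hpq hp.2 hr.2 hp.2 hq.2
  have hqrq : dist q r = dist p q :=
    hbase q hq.1 r hr.1 p hp.1 q hq.1 hqr hpq hq.2 hr.2 hp.2 hq.2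
  by_cases hpqx : dist p q = x
  · rcases exists_dist_ne_of_equilateral hx hpqx (hprq.trans hpqx) (hqrq.trans hpqx) v with
      h | h | h
    exacts [h hp.2, h hq.2, h hr.2]
  obtain ⟨z, hz, hzx, hzy⟩ := exists_mem_ne_ne_of_three_le_card hD x (dist p q)
  have hvpq := (mem_filter.1 (sideLengths_mem_legTypes hx.ne' hv hp.1 hq.1 hpq hp.2 hq.2)).1
  have htypes := hmiss.eq_of_notMem hz hvpq
    (sideLengths_mem_triangleTypes hp.1 hq.1 hr.1 hpq hpr hqr)
    (by simp [mem_sideLengths, *]) (by simp [mem_sideLengths, *])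
  have hx_mem : x ∈ sideLengths p q r := htypes ▸ mem_sideLengths.2 (.inl hp.2.symm)
  rw [mem_sideLengths, hprq, hqrq] at hx_mem
  grind

theorem card_filter_dist_eq_le_one_add_card_legTypes (hmiss : DistancesMissAtMostOne V)
    (hD : 3 ≤ #(distances V)) (hlegs : #(legTypes V x) ≤ 1) (hx : 0 < x) {v : Plane} (hv : v ∈ V) :
    #{q ∈ V | dist v q = x} ≤ 1 + #(legTypes V x) := by
  obtain h | h := (legTypes V x).eq_empty_or_nonempty
  · rw [h, card_empty]
    refine card_le_one.2 fun p hp q hq ↦ by_contra fun hpq ↦ ?_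
    rw [mem_filter] at hp hq
    exact notMem_empty _ (h ▸ sideLengths_mem_legTypes hx.ne' hv hp.1 hq.1 hpq hp.2 hq.2)
  · have := card_filter_dist_eq_le_two hmiss hD hlegs hx hv
    have := h.card_pos
    omega

theorem card_le_two_add_four_mul_card_filter_mem {p v : Plane} (hp : p ∈ V) (hv : v ∈ V)
    (hpv : v ≠ p) : #V ≤ 2 + 4 * #{t ∈ triangleTypes V | dist v p ∈ t} := by
  classical
  refine card_le_two_add_mul_card_filter_mem hp hv hpv fun y z _ ↦ ?_
  rw [filter_or]
  exact (card_union_le _ _).trans (Nat.add_le_add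
    (card_filter_dist_eq_and_dist_eq_le_two V hpv y z)
    (card_filter_dist_eq_and_dist_eq_le_two V hpv z y))

theorem card_le_two_add_two_mul_card_filter_mem {p v : Plane} (hp : p ∈ V) (hv : v ∈ V)
    (hpv : v ≠ p) (hiso : ∀ t ∈ triangleTypes V, ¬t.Nodup)
    (hdeg : ∀ u ∈ V, ∀ r ∈ distances V, #{q ∈ V | dist u q = r} ≤ 2) :
    #V ≤ 2 + 2 * #{t ∈ triangleTypes V | dist v p ∈ t} := by
  classical
  have hone : ∀ u ∈ V, ∀ w ∈ V, u ≠ w → ∀ z, 0 < z →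
      #{q ∈ V | dist u q = dist u w ∧ dist w q = z} ≤ 1 := by
    intro u hu w hw huw z hz
    calc #{q ∈ V | dist u q = dist u w ∧ dist w q = z}
        ≤ #({q ∈ V | dist u q = dist u w}.erase w) := by
          refine card_le_card fun q hq ↦ ?_
          obtain ⟨hqV, huq, rfl⟩ := mem_filter.1 hq
          exact mem_erase.2 ⟨(dist_pos.1 hz).symm, mem_filter.2 ⟨hqV, huq⟩⟩
      _ = #{q ∈ V | dist u q = dist u w} - 1 := card_erase_of_mem (mem_filter.2 ⟨hw, rfl⟩)
      _ ≤ 1 := Nat.sub_le_sub_right (hdeg u hu _ (dist_mem_distances hu hw huw)) 1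
  have hboth : ∀ z, 0 < z →
      #{q ∈ V | dist v q = dist v p ∧ dist p q = z ∨ dist v q = z ∧ dist p q = dist v p} ≤ 2 := by
    intro z hz
    rw [filter_or]
    have hp_apex : #{q ∈ V | dist v q = z ∧ dist p q = dist v p} ≤ 1 := by
      simpa only [dist_comm p v, and_comm] using hone p hp v hv hpv.symm z hz
    exact (card_union_le _ _).trans (Nat.add_le_add (hone v hv p hp hpv z hz) hp_apex)
  refine card_le_two_add_mul_card_filter_mem hp hv hpv fun y z hyz ↦ ?_
  have hpos : ∀ w ∈ ({dist v p, y, z} : Multiset ℝ), 0 < w := fun w hw ↦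
    pos_of_mem_distances (mem_distances_of_mem_triangleTypes hyz hw)
  have : y = z ∨ y = dist v p ∨ z = dist v p := by
    have := hiso _ hyz
    simp only [Multiset.insert_eq_cons, Multiset.nodup_cons, Multiset.mem_cons,
      Multiset.mem_singleton, Multiset.nodup_singleton] at this
    grind
  rcases this with rfl | rfl | rfl
  · simpa using card_filter_dist_eq_and_dist_eq_le_two V hpv y y
  · exact hboth z (hpos z (by simp))
  · simpa only [or_comm] using hboth y (hpos y (by simp))

end Degrees

section Bridge

variable {V : Finset Plane}

theorem distancesMissAtMostOne_of_four_mul_card_triangleTypes_lt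
    (hT : 4 * #(triangleTypes V) < #V + 6) : DistancesMissAtMostOne V := by
  intro r hr
  obtain ⟨v, hv, p, hp, hvp, rfl⟩ := mem_distances.1 hr
  have hthrough := card_le_two_add_four_mul_card_filter_mem hp hv hvp
  have hsplit := card_filter_add_card_filter_not (s := triangleTypes V) (dist v p ∈ ·)
  omega

theorem card_le_one_add_card_distances_add_sum_card_legTypes (hmiss : DistancesMissAtMostOne V)
    (hD : 3 ≤ #(distances V)) (hlegs : ∀ r, #(legTypes V r) ≤ 1) :
    #V ≤ 1 + (#(distances V) + ∑ r ∈ distances V, #(legTypes V r)) := by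
  obtain rfl | ⟨v, hv⟩ := V.eq_empty_or_nonempty
  · simp
  calc #V ≤ 1 + ∑ r ∈ distances V, #{q ∈ V | dist v q = r} :=
        card_le_one_add_sum_card_filter_dist_eq hv
    _ ≤ 1 + ∑ r ∈ distances V, (1 + #(legTypes V r)) := by
        gcongr with r hr
        exact card_filter_dist_eq_le_one_add_card_legTypes hmiss hD (hlegs r)
          (pos_of_mem_distances hr) hv
    _ = 1 + (#(distances V) + ∑ r ∈ distances V, #(legTypes V r)) := by
        rw [sum_add_distrib, ← card_eq_sum_ones]

theorem card_le_six_of_card_triangleTypes_le_three (hT : #(triangleTypes V) ≤ 3) : #V ≤ 6 := by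
  by_contra! hV
  have hmiss : DistancesMissAtMostOne V :=
    distancesMissAtMostOne_of_four_mul_card_triangleTypes_lt (by omega)
  have hD : 3 ≤ #(distances V) := three_le_card_distances hV
  have hlegs : ∀ r, #(legTypes V r) ≤ 1 := fun r ↦ by
    by_contra! h
    exact hV.not_ge (card_le_six_of_two_le_card_legTypes hT hmiss hD h)
  have hneighbours := card_le_one_add_card_distances_add_sum_card_legTypes hmiss hD hlegs
  have htwo : 2 * #(distances V) + ∑ r ∈ distances V, #(legTypes V r) ≤ 3 * #(triangleTypes V) :=
    mul_card_distances_add_sum_card_legTypes_le fun v hv p hp hvp ↦ by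
      have := card_le_two_add_four_mul_card_filter_mem hp hv hvp
      omega
  have hisosceles : ∀ t ∈ triangleTypes V, ¬t.Nodup :=
    not_nodup_of_card_le_sum_card_legTypes (by omega)
  have hthree : 3 * #(distances V) + ∑ r ∈ distances V, #(legTypes V r) ≤ 3 * #(triangleTypes V) :=
    mul_card_distances_add_sum_card_legTypes_le fun v hv p hp hvp ↦ by
      have := card_le_two_add_two_mul_card_filter_mem hp hv hvp hisosceles fun u hu r hr ↦
        (card_filter_dist_eq_le_two hmiss hD (hlegs r) (pos_of_mem_distances hr) hu)
      omega
  omega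

theorem sideLengths_eq_of_cong {a b c a' b' c' : Plane} (hab : a' ≠ b') (hac : a' ≠ c')
    (hbc : b' ≠ c') (h : Cong {a, b, c} {a', b', c'}) :
    sideLengths a b c = sideLengths a' b' c' := by
  obtain ⟨f, hf⟩ := h
  simp only [Set.image_insert_eq, Set.image_singleton] at hf
  rw [sideLengths_eq_of_subset hab hac hbc hf.ge, sideLengths_map_of_isometry f.isometry]

theorem Cong.refl (S : Set Plane) : Cong S S := ⟨IsometryEquiv.refl Plane, Set.image_id S⟩

theorem card_triangleTypes_le_numTriangles {V : Finset Plane} {P : Set Plane} (hVP : ↑V ⊆ P) :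
    (#(triangleTypes V) : ℕ∞) ≤ numTriangles P := by
  have htriple : ∀ t ∈ triangleTypes V, ∃ a b c : Plane, a ≠ b ∧ a ≠ c ∧ b ≠ c ∧
      {a, b, c} ∈ triplesOf P ∧ sideLengths a b c = t := by
    intro t ht
    obtain ⟨a, ha, b, hb, c, hc, hab, hac, hbc, rfl⟩ := mem_triangleTypes.1 ht
    exact ⟨a, b, c, hab, hac, hbc, ⟨a, b, c, hVP ha, hVP hb, hVP hc, hab, hac, hbc, rfl⟩, rfl⟩
  choose! a b c hab hac hbc htrip hsides using htriple
  let triple (t : Multiset ℝ) : Set Plane := {a t, b t, c t}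
  let congruenceClass (t : Multiset ℝ) : Set (Set Plane) := {s ∈ triplesOf P | Cong (triple t) s}
  have hinj : Set.InjOn congruenceClass (triangleTypes V) := by
    intro t ht u hu htu
    have hmem : triple u ∈ congruenceClass t := htu ▸ ⟨htrip u hu, Cong.refl _⟩
    rw [← hsides t ht, ← hsides u hu]
    exact sideLengths_eq_of_cong (hab u hu) (hac u hu) (hbc u hu) hmem.2
  rw [← Set.encard_coe_eq_coe_finsetCard, ← hinj.encard_image, numTriangles]
  refine Set.encard_le_encard ?_
  rintro _ ⟨t, ht, rfl⟩
  exact ⟨triple t, htrip t ht, rfl⟩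

end Bridge

end

/-- Any set of points in the plane spanning at most 3 distinct triangles
contains at most 6 points. -/
theorem at_most_three_triangles_implies_at_most_six_points
    (P : Set Plane) (h : numTriangles P ≤ 3) : P.encard ≤ 6 := by
  by_contra! hP
  obtain ⟨Q, hQP, hQ⟩ := Set.exists_subset_encard_eq (Order.add_one_le_of_lt hP)
  have hfin : Q.Finite := Set.finite_of_encard_eq_coe (k := 7) hQ
  lift Q to Finset Plane using hfin
  rw [Set.encard_coe_eq_coe_finsetCard] at hQ
  have hT : (triangleTypes Q).card ≤ 3 := by
    exact_mod_cast (card_triangleTypes_le_numTriangles hQP).trans h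
  have hQ7 : Q.card = 7 := by exact_mod_cast hQ
  have hQ6 : Q.card ≤ 6 := card_le_six_of_card_triangleTypes_le_three hT
  omega
end
end

section
/- Let R(N) denote the number of unordered pairs {A,B} of distinct nonzero points of [N]×[N] such that the triangle with vertices (0,0), A, B is rotatable. Then limsup over N → ∞ of R(N)/N⁴ is at most the sum over all primitive Pythagorean triples (p,q,r) ∈ 𝒫 of 1/(2r²), and in particular is at most 0.0633. -/
open Real

noncomputable section

/-- Membership in the grid `[N] × [N] = {0, 1, …, N-1}²`. -/
def inGrid (N : ℕ) (P : ℤ × ℤ) : Prop := 0 ≤ P.1 ∧ P.1 < N ∧ 0 ≤ P.2 ∧ P.2 < N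

/-- A primitive Pythagorean triple: positive integers `p, q, r` with
`p² + q² = r²` and `gcd(p, q) = 1`. -/
def IsPPT (p q r : ℕ) : Prop :=
  0 < p ∧ 0 < q ∧ 0 < r ∧ p ^ 2 + q ^ 2 = r ^ 2 ∧ Nat.gcd p q = 1

/-- A lattice point `P ∈ ℤ²` is rotatable by the angle `θ` if its counterclockwise
rotation about the origin by `θ` is again a lattice point. -/
def RotatableBy (P : ℤ × ℤ) (θ : ℝ) : Prop :=
  ∃ Q : ℤ × ℤ, (Q.1 : ℝ) = P.1 * Real.cos θ - P.2 * Real.sin θ ∧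
    (Q.2 : ℝ) = P.1 * Real.sin θ + P.2 * Real.cos θ

/-- The set of primitive Pythagorean triples, where `(p, q, r)` and `(q, p, r)`
are counted separately. -/
def PPT : Set (ℕ × ℕ × ℕ) := {t | IsPPT t.1 t.2.1 t.2.2}

/-- The triangle with vertices at the origin, `A` and `B` is rotatable if there is
an angle `θ`, not an integer multiple of `90°`, by which both `A` and `B` are
rotatable. -/
def RotatableTriangle (A B : ℤ × ℤ) : Prop :=
  ∃ θ : ℝ, (∀ k : ℤ, θ ≠ k * (π / 2)) ∧ RotatableBy A θ ∧ RotatableBy B θ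

/-- `R N` is the number of unordered pairs `{A, B}` of distinct nonzero points of the
grid `[N] × [N]` such that the triangle with vertices `(0,0)`, `A`, `B` is rotatable. -/
def R (N : ℕ) : ℕ :=
  {s : Set (ℤ × ℤ) | ∃ A B : ℤ × ℤ, A ≠ B ∧ A ≠ (0, 0) ∧ B ≠ (0, 0) ∧
    inGrid N A ∧ inGrid N B ∧ RotatableTriangle A B ∧ s = {A, B}}.ncard

/-!
A rotation by `θ ∉ (π/2)ℤ` which sends some nonzero lattice point to a lattice point has rational
sine and cosine, so up to quarter turns `(cos θ, sin θ) = (p/r, q/r)` for a primitive Pythagorean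
triple `(p, q, r)`. The lattice points rotatable by this angle form a sublattice of index `r` in
`ℤ²`, so one triple accounts for about `(N²/r)²/2` pairs. Every nonzero point of the sublattice has
squared norm divisible by `r`; hence this number of pairs is at most `32 N⁴/r²` whatever `N` and `r`
are, and dominated convergence allows passing to the limit under the sum over all triples.
By Euclid's parametrization `∑ 1/r²` is at most the sum of `1/(m² + n²)²` over positive `m, n` of
opposite parity, which is estimated by its terms with `m, n ≤ 8` and a telescoping tail.
-/

open Filter Topology

/-! ### Euclid's parametrization and the sum over triples -/

/-- The primitive Pythagorean triple with parameters `m` and `n` of opposite parity; the odd leg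
comes first when `n < m` and second when `m < n`, so that both orders of the legs are obtained. -/
def euclidTriple (m n : ℕ) : ℕ × ℕ × ℕ :=
  if n < m then (m ^ 2 - n ^ 2, 2 * m * n, m ^ 2 + n ^ 2)
  else (2 * m * n, n ^ 2 - m ^ 2, m ^ 2 + n ^ 2)

theorem euclidTriple_hypotenuse (m n : ℕ) : (euclidTriple m n).2.2 = m ^ 2 + n ^ 2 := by
  unfold euclidTriple
  split_ifs <;> rfl

namespace IsPPT

variable {p q r : ℕ}

theorem symm (h : IsPPT p q r) : IsPPT q p r := by
  obtain ⟨hp, hq, hr, hsq, hpq⟩ := h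
  exact ⟨hq, hp, hr, by rw [add_comm, hsq], by rwa [Nat.gcd_comm]⟩

theorem pythagoreanTriple (h : IsPPT p q r) : PythagoreanTriple (p : ℤ) q r := by
  obtain ⟨-, -, -, hsq, -⟩ := h
  simp only [PythagoreanTriple, ← sq]
  exact_mod_cast hsq

theorem intGcd_eq_one (h : IsPPT p q r) : Int.gcd (p : ℤ) q = 1 := by
  simpa using h.2.2.2.2

theorem isCoprime_hypotenuse_leg (h : IsPPT p q r) : IsCoprime (r : ℤ) p :=
  (Int.isCoprime_iff_gcd_eq_one.mpr
    (h.symm.pythagoreanTriple.coprime_of_coprime h.symm.intGcd_eq_one)).symm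

theorem odd_or_odd (h : IsPPT p q r) : Odd p ∨ Odd q := by
  simp only [← Nat.not_even_iff_odd, even_iff_two_dvd]
  by_contra! heven
  have htwo : 2 ∣ Nat.gcd p q := Nat.dvd_gcd heven.1 heven.2
  rw [h.2.2.2.2] at htwo
  omega

theorem exists_eq_of_odd (h : IsPPT p q r) (hp : Odd p) :
    ∃ m n : ℕ, 0 < n ∧ n < m ∧ Odd (m + n) ∧
      p = m ^ 2 - n ^ 2 ∧ q = 2 * m * n ∧ r = m ^ 2 + n ^ 2 := by
  have hp_mod : (p : ℤ) % 2 = 1 := by exact_mod_cast Nat.odd_iff.mp hp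
  have hp_pos : (0 : ℤ) < p := by exact_mod_cast h.1
  have hq_pos : (0 : ℤ) < q := by exact_mod_cast h.2.1
  have hr_pos : (0 : ℤ) < r := by exact_mod_cast h.2.2.1
  obtain ⟨m, n, hpmn, hqmn, hrmn, -, hparity, hm⟩ :=
    h.pythagoreanTriple.coprime_classification' h.intGcd_eq_one hp_mod hr_pos
  have hn : 0 < n := pos_of_mul_pos_right (hqmn ▸ hq_pos) (by positivity)
  lift m to ℕ using hm
  lift n to ℕ using hn.le
  have hnm : n < m := by
    have : (n : ℤ) ^ 2 < (m : ℤ) ^ 2 := by linarith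
    exact_mod_cast lt_of_pow_lt_pow_left₀ 2 (by positivity) this
  refine ⟨m, n, by exact_mod_cast hn, hnm, Nat.odd_iff.mpr (by omega), ?_,
    by exact_mod_cast hqmn, by exact_mod_cast hrmn⟩
  zify [Nat.pow_le_pow_left hnm.le 2]
  exact hpmn

theorem exists_euclidTriple_eq (h : IsPPT p q r) :
    ∃ m n : ℕ, 0 < m ∧ 0 < n ∧ Odd (m + n) ∧ euclidTriple m n = (p, q, r) := by
  rcases h.odd_or_odd with hp | hq
  · obtain ⟨m, n, hn, hnm, hodd, rfl, rfl, rfl⟩ := h.exists_eq_of_odd hp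
    exact ⟨m, n, hn.trans hnm, hn, hodd, if_pos hnm⟩
  · obtain ⟨m, n, hn, hnm, hodd, rfl, rfl, rfl⟩ := h.symm.exists_eq_of_odd hq
    refine ⟨n, m, hn, hn.trans hnm, by rwa [add_comm], ?_⟩
    rw [euclidTriple, if_neg hnm.not_gt, mul_right_comm, add_comm (n ^ 2)]

end IsPPT

/-- The value `1/r²` for the triple with Euclid parameters `m, n`, extended by zero to all of `ℕ²`.
Parameters with a common factor are kept: their contribution is small enough for the numerical
bound. -/
def euclidWeight (m n : ℕ) : ℝ :=
  if 0 < m ∧ 0 < n ∧ Odd (m + n) then 1 / ((m : ℝ) ^ 2 + (n : ℝ) ^ 2) ^ 2 else 0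

theorem euclidWeight_nonneg (m n : ℕ) : 0 ≤ euclidWeight m n := by
  unfold euclidWeight
  split_ifs <;> positivity

theorem euclidWeight_self (m : ℕ) : euclidWeight m m = 0 :=
  if_neg fun h => Nat.not_odd_iff_even.mpr ⟨m, rfl⟩ h.2.2

theorem euclidWeight_comm (m n : ℕ) : euclidWeight m n = euclidWeight n m := by
  simp only [euclidWeight, and_left_comm, add_comm]

theorem euclidWeight_le {n : ℕ} (hn : 0 < n) (m : ℕ) : euclidWeight m n ≤ 1 / (n : ℝ) ^ 4 := by
  unfold euclidWeight
  split_ifs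
  · rw [show (n : ℝ) ^ 4 = ((n : ℝ) ^ 2) ^ 2 by ring]
    gcongr
    exact le_add_of_nonneg_left (by positivity)
  · positivity

theorem sum_range_sum_range_succ {M : Type*} [AddCommMonoid M] (f : ℕ → ℕ → M) (k : ℕ) :
    ∑ m ∈ Finset.range (k + 1), ∑ n ∈ Finset.range (k + 1), f m n =
      ∑ m ∈ Finset.range k, ∑ n ∈ Finset.range k, f m n +
        ∑ i ∈ Finset.range k, (f i k + f k i) + f k k := by
  simp only [Finset.sum_range_succ, Finset.sum_add_distrib]
  abel

theorem sum_euclidWeight_shell_le {k : ℕ} (hk : 0 < k) :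
    ∑ i ∈ Finset.range k, (euclidWeight i k + euclidWeight k i) ≤ 2 / (k : ℝ) ^ 3 := by
  calc ∑ i ∈ Finset.range k, (euclidWeight i k + euclidWeight k i)
      ≤ ∑ _i ∈ Finset.range k, (1 / (k : ℝ) ^ 4 + 1 / (k : ℝ) ^ 4) := by
        gcongr with i
        · exact euclidWeight_le hk i
        · exact euclidWeight_comm k i ▸ euclidWeight_le hk i
    _ = 2 / (k : ℝ) ^ 3 := by
        rw [Finset.sum_const, Finset.card_range, nsmul_eq_mul]
        field_simp
        norm_num

theorem sum_euclidWeight_range_nine_le :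
    ∑ m ∈ Finset.range 9, ∑ n ∈ Finset.range 9, euclidWeight m n ≤ 0.1266 - 1 / (9 * 8) := by
  norm_num [Finset.sum_range_succ, euclidWeight, Nat.odd_iff]

theorem sum_euclidWeight_box_le {k : ℕ} (hk : 9 ≤ k) :
    ∑ m ∈ Finset.range k, ∑ n ∈ Finset.range k, euclidWeight m n ≤
      0.1266 - 1 / ((k : ℝ) * (k - 1)) := by
  induction k, hk using Nat.le_induction with
  | base => exact sum_euclidWeight_range_nine_le.trans_eq (by norm_num)
  | succ k hk ih =>
    have hk' : (9 : ℝ) ≤ k := by exact_mod_cast hk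
    have htelescope :
        2 / (k : ℝ) ^ 3 ≤
          1 / ((k : ℝ) * (k - 1)) - 1 / (((k + 1 : ℕ) : ℝ) * ((k + 1 : ℕ) - 1)) := by
      have hk_pred : (0 : ℝ) < k - 1 := by linarith
      have hgap : 1 / ((k : ℝ) * (k - 1)) - 1 / (((k + 1 : ℕ) : ℝ) * ((k + 1 : ℕ) - 1)) =
          2 / (((k : ℝ) - 1) * k * (k + 1)) := by
        push_cast
        rw [add_sub_cancel_right]
        field_simp
        ring
      rw [hgap]
      gcongr
      nlinarith
    rw [sum_range_sum_range_succ, euclidWeight_self]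
    linarith [sum_euclidWeight_shell_le (k := k) (by omega)]

theorem sum_euclidWeight_le (u : Finset (ℕ × ℕ)) : ∑ z ∈ u, euclidWeight z.1 z.2 ≤ 0.1266 := by
  set k := u.sup Prod.fst + u.sup Prod.snd + 9
  have hsub : u ⊆ Finset.range k ×ˢ Finset.range k := by
    intro z hz
    have hfst : z.1 ≤ u.sup Prod.fst := Finset.le_sup (f := Prod.fst) hz
    have hsnd : z.2 ≤ u.sup Prod.snd := Finset.le_sup (f := Prod.snd) hz
    simp only [Finset.mem_product, Finset.mem_range, k]
    omega
  have hk : (9 : ℝ) ≤ k := by exact_mod_cast Nat.le_add_left 9 _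
  have htail : 0 ≤ 1 / ((k : ℝ) * (k - 1)) :=
    one_div_nonneg.mpr (mul_nonneg (by linarith) (by linarith))
  calc ∑ z ∈ u, euclidWeight z.1 z.2
      ≤ ∑ z ∈ Finset.range k ×ˢ Finset.range k, euclidWeight z.1 z.2 :=
        Finset.sum_le_sum_of_subset_of_nonneg hsub fun z _ _ => euclidWeight_nonneg z.1 z.2
    _ = ∑ m ∈ Finset.range k, ∑ n ∈ Finset.range k, euclidWeight m n := Finset.sum_product _ _ _
    _ ≤ 0.1266 := by linarith [sum_euclidWeight_box_le (k := k) (Nat.le_add_left 9 _)]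

theorem summable_euclidWeight : Summable fun z : ℕ × ℕ => euclidWeight z.1 z.2 :=
  summable_of_sum_le (fun z => euclidWeight_nonneg z.1 z.2) sum_euclidWeight_le

theorem exists_injective_euclidWeight_eq :
    ∃ φ : PPT → ℕ × ℕ, Function.Injective φ ∧
      ∀ t : PPT, euclidWeight (φ t).1 (φ t).2 = 1 / ((t : ℕ × ℕ × ℕ).2.2 : ℝ) ^ 2 := by
  choose m n hm hn hodd heq using fun t : PPT => IsPPT.exists_euclidTriple_eq t.2
  refine ⟨fun t => (m t, n t), fun t t' htt' => Subtype.ext ?_, fun t => ?_⟩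
  · obtain ⟨hmm, hnn⟩ := Prod.mk.inj htt'
    exact (heq t).symm.trans (hmm ▸ hnn ▸ heq t')
  · have hhyp : (t : ℕ × ℕ × ℕ).2.2 = m t ^ 2 + n t ^ 2 := by
      rw [← euclidTriple_hypotenuse, heq]
    rw [euclidWeight, if_pos ⟨hm t, hn t, hodd t⟩, hhyp]
    push_cast
    rfl

theorem summable_one_div_hypotenuse_sq :
    Summable fun t : PPT => 1 / ((t : ℕ × ℕ × ℕ).2.2 : ℝ) ^ 2 := by
  obtain ⟨φ, hφ, hweight⟩ := exists_injective_euclidWeight_eq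
  simpa only [← hweight, Function.comp_def] using summable_euclidWeight.comp_injective hφ

theorem tsum_one_div_hypotenuse_sq_le :
    ∑' t : PPT, 1 / ((t : ℕ × ℕ × ℕ).2.2 : ℝ) ^ 2 ≤ 0.1266 := by
  obtain ⟨φ, hφ, hweight⟩ := exists_injective_euclidWeight_eq
  calc ∑' t : PPT, 1 / ((t : ℕ × ℕ × ℕ).2.2 : ℝ) ^ 2
      = ∑' t : PPT, euclidWeight (φ t).1 (φ t).2 := by simp only [hweight]
    _ ≤ ∑' z : ℕ × ℕ, euclidWeight z.1 z.2 :=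
        tsum_comp_le_tsum_of_inj summable_euclidWeight (fun z => euclidWeight_nonneg z.1 z.2) hφ
    _ ≤ 0.1266 :=
        Real.tsum_le_of_sum_le (fun z => euclidWeight_nonneg z.1 z.2) sum_euclidWeight_le

theorem tsum_one_div_two_mul_hypotenuse_sq_le :
    ∑' t : PPT, 1 / (2 * ((t : ℕ × ℕ × ℕ).2.2 : ℝ) ^ 2) ≤ 0.0633 := by
  simp only [one_div, mul_inv, tsum_mul_left]
  have := tsum_one_div_hypotenuse_sq_le
  simp only [one_div] at this
  linarith

/-! ### Rotations and primitive Pythagorean triples -/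

theorem rotatableBy_periodic (P : ℤ × ℤ) : Function.Periodic (RotatableBy P) (π / 2) := by
  intro θ
  simp only [RotatableBy, Real.cos_add_pi_div_two, Real.sin_add_pi_div_two, eq_iff_iff]
  constructor
  · rintro ⟨Q, hQ₁, hQ₂⟩
    exact ⟨(Q.2, -Q.1), by rw [hQ₂]; ring, by push_cast; rw [hQ₁]; ring⟩
  · rintro ⟨Q, hQ₁, hQ₂⟩
    exact ⟨(-Q.2, Q.1), by push_cast; rw [hQ₂]; ring, by rw [hQ₁]; ring⟩

theorem RotatableTriangle.exists_mem_Ioo {A B : ℤ × ℤ} (h : RotatableTriangle A B) :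
    ∃ θ ∈ Set.Ioo 0 (π / 2), RotatableBy A θ ∧ RotatableBy B θ := by
  obtain ⟨θ, hθ, hA, hB⟩ := h
  obtain ⟨k, ⟨hk_nonneg, hk_lt⟩, -⟩ := existsUnique_add_zsmul_mem_Ico Real.pi_div_two_pos θ 0
  rw [zero_add] at hk_lt
  refine ⟨θ + k • (π / 2), ⟨hk_nonneg.lt_of_ne fun hzero => hθ (-k) ?_, hk_lt⟩, ?_, ?_⟩
  · rw [zsmul_eq_mul] at hzero
    push_cast
    linarith
  · rwa [(rotatableBy_periodic A).zsmul k θ]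
  · rwa [(rotatableBy_periodic B).zsmul k θ]

theorem exists_isPPT_of_sq_add_sq_eq_sq {u v d : ℕ} (hu : 0 < u) (hv : 0 < v)
    (h : u ^ 2 + v ^ 2 = d ^ 2) :
    ∃ p q r g : ℕ, IsPPT p q r ∧ u = p * g ∧ v = q * g ∧ d = r * g := by
  obtain ⟨g, p, q, hg, hpq, rfl, rfl⟩ := Nat.exists_coprime' (Nat.gcd_pos_of_pos_left v hu)
  have hg_dvd : g ∣ d := by
    rw [← Nat.pow_dvd_pow_iff two_ne_zero, ← h]
    exact ⟨p ^ 2 + q ^ 2, by ring⟩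
  obtain ⟨r, rfl⟩ := hg_dvd
  have hp : 0 < p := Nat.pos_of_mul_pos_right hu
  have hsq : p ^ 2 + q ^ 2 = r ^ 2 :=
    Nat.eq_of_mul_eq_mul_left (pow_pos hg 2) (by linarith)
  have hr : 0 < r := Nat.pos_of_ne_zero fun hr => by subst hr; nlinarith
  exact ⟨p, q, r, g, ⟨hp, Nat.pos_of_mul_pos_right hv, hr, hsq, hpq⟩, rfl, rfl, mul_comm g r⟩

theorem exists_isPPT_of_intCast_eq_mul {u v : ℤ} {d : ℕ} {x y : ℝ} (hd : 0 < d) (hx : 0 < x)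
    (hy : 0 < y) (hxy : x ^ 2 + y ^ 2 = 1) (hu : (u : ℝ) = d * x) (hv : (v : ℝ) = d * y) :
    ∃ p q r : ℕ, IsPPT p q r ∧ r * x = p ∧ r * y = q := by
  have hdR : (0 : ℝ) < d := by exact_mod_cast hd
  have hu_pos : 0 < u := by exact_mod_cast hu ▸ mul_pos hdR hx
  have hv_pos : 0 < v := by exact_mod_cast hv ▸ mul_pos hdR hy
  lift u to ℕ using hu_pos.le
  lift v to ℕ using hv_pos.le
  rw [Int.cast_natCast] at hu hv
  have hsq : u ^ 2 + v ^ 2 = d ^ 2 := by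
    have : (u : ℝ) ^ 2 + (v : ℝ) ^ 2 = (d : ℝ) ^ 2 := by
      rw [hu, hv]
      linear_combination (d : ℝ) ^ 2 * hxy
    exact_mod_cast this
  obtain ⟨p, q, r, g, hpqr, rfl, rfl, rfl⟩ :=
    exists_isPPT_of_sq_add_sq_eq_sq (by exact_mod_cast hu_pos) (by exact_mod_cast hv_pos) hsq
  have hg : (g : ℝ) ≠ 0 := by exact_mod_cast (Nat.pos_of_mul_pos_left hd).ne'
  push_cast at hu hv
  exact ⟨p, q, r, hpqr, mul_right_cancel₀ hg (by linarith), mul_right_cancel₀ hg (by linarith)⟩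

theorem RotatableBy.exists_isPPT {P : ℤ × ℤ} {θ : ℝ} (h : RotatableBy P θ) (hP : P ≠ (0, 0))
    (hθ : θ ∈ Set.Ioo 0 (π / 2)) :
    ∃ p q r : ℕ, IsPPT p q r ∧ r * Real.cos θ = p ∧ r * Real.sin θ = q := by
  obtain ⟨Q, hQ₁, hQ₂⟩ := h
  have hcos : 0 < Real.cos θ := Real.cos_pos_of_mem_Ioo ⟨by linarith [hθ.1, Real.pi_pos], hθ.2⟩
  have hsin : 0 < Real.sin θ := Real.sin_pos_of_pos_of_lt_pi hθ.1 (by linarith [hθ.1, hθ.2])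
  have hP' : P.1 ≠ 0 ∨ P.2 ≠ 0 := by
    by_contra! hzero
    exact hP (Prod.ext hzero.1 hzero.2)
  have hnorm : 0 < P.1 ^ 2 + P.2 ^ 2 := by
    rcases hP' with hx | hy <;> positivity
  obtain ⟨d, hd⟩ := Int.eq_ofNat_of_zero_le hnorm.le
  have hdR : (d : ℝ) = (P.1 : ℝ) ^ 2 + (P.2 : ℝ) ^ 2 := by exact_mod_cast hd.symm
  have hd_pos : (0 : ℝ) < d := by rw [hdR]; exact_mod_cast hnorm
  have hu : ((P.1 * Q.1 + P.2 * Q.2 : ℤ) : ℝ) = d * Real.cos θ := by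
    push_cast
    rw [hQ₁, hQ₂, hdR]
    ring
  have hv : ((P.1 * Q.2 - P.2 * Q.1 : ℤ) : ℝ) = d * Real.sin θ := by
    push_cast
    rw [hQ₁, hQ₂, hdR]
    ring
  exact exists_isPPT_of_intCast_eq_mul (by exact_mod_cast hd_pos) hcos hsin
    (Real.cos_sq_add_sin_sq θ) hu hv

/-- The lattice points whose rotation by the angle with cosine `p / r` and sine `q / r` is again a
lattice point. -/
def rotatableLattice (p q r : ℤ) : AddSubgroup (ℤ × ℤ) where
  carrier := {P | r ∣ p * P.1 - q * P.2 ∧ r ∣ q * P.1 + p * P.2}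
  zero_mem' := by simp
  add_mem' := fun ⟨hP₁, hP₂⟩ ⟨hQ₁, hQ₂⟩ =>
    ⟨by simpa [mul_add, add_sub_add_comm] using dvd_add hP₁ hQ₁,
      by simpa [mul_add, add_add_add_comm] using dvd_add hP₂ hQ₂⟩
  neg_mem' := fun ⟨hP₁, hP₂⟩ =>
    ⟨by simpa [neg_add_eq_sub] using dvd_sub_comm.mp hP₁,
      by simpa only [Prod.fst_neg, Prod.snd_neg, mul_neg, ← neg_add, dvd_neg] using hP₂⟩

theorem mem_rotatableLattice {p q r : ℤ} {P : ℤ × ℤ} :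
    P ∈ rotatableLattice p q r ↔ r ∣ p * P.1 - q * P.2 ∧ r ∣ q * P.1 + p * P.2 :=
  Iff.rfl

theorem RotatableBy.mem_rotatableLattice {P : ℤ × ℤ} {θ : ℝ} {p q r : ℤ} (h : RotatableBy P θ)
    (hcos : r * Real.cos θ = p) (hsin : r * Real.sin θ = q) : P ∈ rotatableLattice p q r := by
  obtain ⟨Q, hQ₁, hQ₂⟩ := h
  refine ⟨⟨Q.1, ?_⟩, ⟨Q.2, ?_⟩⟩
  · have : ((p * P.1 - q * P.2 : ℤ) : ℝ) = (r * Q.1 : ℤ) := by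
      push_cast
      rw [hQ₁, ← hcos, ← hsin]
      ring
    exact_mod_cast this
  · have : ((q * P.1 + p * P.2 : ℤ) : ℝ) = (r * Q.2 : ℤ) := by
      push_cast
      rw [hQ₂, ← hcos, ← hsin]
      ring
    exact_mod_cast this

theorem RotatableTriangle.exists_isPPT {A B : ℤ × ℤ} (h : RotatableTriangle A B)
    (hA : A ≠ (0, 0)) :
    ∃ p q r : ℕ, IsPPT p q r ∧ A ∈ rotatableLattice p q r ∧ B ∈ rotatableLattice p q r := by
  obtain ⟨θ, hθ, hAθ, hBθ⟩ := h.exists_mem_Ioo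
  obtain ⟨p, q, r, hpqr, hcos, hsin⟩ := hAθ.exists_isPPT hA hθ
  exact ⟨p, q, r, hpqr, hAθ.mem_rotatableLattice (by exact_mod_cast hcos) (by exact_mod_cast hsin),
    hBθ.mem_rotatableLattice (by exact_mod_cast hcos) (by exact_mod_cast hsin)⟩

/-! ### Counting lattice points in the grid -/

/-- The grid `[N] × [N]` as a finite set. -/
def gridFinset (N : ℕ) : Finset (ℤ × ℤ) := Finset.Ico 0 (N : ℤ) ×ˢ Finset.Ico 0 (N : ℤ)

theorem mem_gridFinset {N : ℕ} {P : ℤ × ℤ} : P ∈ gridFinset N ↔ inGrid N P := by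
  simp only [gridFinset, inGrid, Finset.mem_product, Finset.mem_Ico, and_assoc]

open Classical in
/-- The points of the subgroup `L` of `ℤ²` which lie in the grid `[N] × [N]`. -/
def latticePoints (L : AddSubgroup (ℤ × ℤ)) (N : ℕ) : Finset (ℤ × ℤ) :=
  {P ∈ gridFinset N | P ∈ L}

theorem mem_latticePoints {L : AddSubgroup (ℤ × ℤ)} {N : ℕ} {P : ℤ × ℤ} :
    P ∈ latticePoints L N ↔ inGrid N P ∧ P ∈ L := by
  simp only [latticePoints, Finset.mem_filter, mem_gridFinset]

theorem abs_sub_lt_of_ediv_eq {a b s : ℤ} (hs : 0 < s) (h : a / s = b / s) : |a - b| < s := by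
  rw [← Int.mul_ediv_add_emod a s, ← Int.mul_ediv_add_emod b s, h, add_sub_add_left_eq_sub, abs_lt]
  constructor <;>
    linarith [Int.emod_nonneg a hs.ne', Int.emod_nonneg b hs.ne', Int.emod_lt_of_pos a hs,
      Int.emod_lt_of_pos b hs]

-- Tile the grid by `a × b` boxes: each box contains at most one point of `L`.
theorem card_latticePoints_le {L : AddSubgroup (ℤ × ℤ)} {a b : ℕ} (ha : 0 < a) (hb : 0 < b)
    (hL : ∀ P ∈ L, |P.1| < a → |P.2| < b → P = 0) (N : ℕ) :
    (latticePoints L N).card ≤ (N / a + 1) * (N / b + 1) := by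
  have ha' : (0 : ℤ) < a := by exact_mod_cast ha
  have hb' : (0 : ℤ) < b := by exact_mod_cast hb
  let box : ℤ × ℤ → ℤ × ℤ := fun P => (P.1 / a, P.2 / b)
  have hmaps : ∀ P ∈ latticePoints L N,
      box P ∈ Finset.Icc 0 ((N / a : ℕ) : ℤ) ×ˢ Finset.Icc 0 ((N / b : ℕ) : ℤ) := by
    intro P hP
    obtain ⟨⟨hx₀, hx, hy₀, hy⟩, -⟩ := mem_latticePoints.mp hP
    simp only [box, Finset.mem_product, Finset.mem_Icc, Int.natCast_ediv]
    exact ⟨⟨Int.ediv_nonneg hx₀ ha'.le, Int.ediv_le_ediv ha' hx.le⟩,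
      Int.ediv_nonneg hy₀ hb'.le, Int.ediv_le_ediv hb' hy.le⟩
  have hinj : Set.InjOn box (latticePoints L N) := by
    intro P hP Q hQ hPQ
    obtain ⟨hx, hy⟩ := Prod.mk.inj hPQ
    exact sub_eq_zero.mp <| hL (P - Q)
      (L.sub_mem (mem_latticePoints.mp hP).2 (mem_latticePoints.mp hQ).2)
      (abs_sub_lt_of_ediv_eq ha' hx) (abs_sub_lt_of_ediv_eq hb' hy)
  simpa only [Finset.card_product, Int.card_Icc, sub_zero, Int.toNat_natCast_add_one] using
    Finset.card_le_card_of_injOn box hmaps hinj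

section RotatableLattice

variable {p q r : ℤ} {P : ℤ × ℤ}

theorem dvd_sq_add_sq_of_mem_rotatableLattice (hrp : IsCoprime r p)
    (hP : P ∈ rotatableLattice p q r) : r ∣ P.1 ^ 2 + P.2 ^ 2 := by
  obtain ⟨h₁, h₂⟩ := mem_rotatableLattice.mp hP
  apply hrp.dvd_of_dvd_mul_left
  rw [show p * (P.1 ^ 2 + P.2 ^ 2) = P.1 * (p * P.1 - q * P.2) + P.2 * (q * P.1 + p * P.2) by ring]
  exact dvd_add (h₁.mul_left _) (h₂.mul_left _)

theorem eq_zero_of_mem_rotatableLattice_of_sq_add_sq_lt (hrp : IsCoprime r p)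
    (hP : P ∈ rotatableLattice p q r) (hlt : P.1 ^ 2 + P.2 ^ 2 < r) : P = 0 := by
  have hnorm : P.1 ^ 2 + P.2 ^ 2 = 0 := Int.eq_zero_of_dvd_of_nonneg_of_lt (by positivity) hlt
    (dvd_sq_add_sq_of_mem_rotatableLattice hrp hP)
  obtain ⟨hfst, hsnd⟩ := (add_eq_zero_iff_of_nonneg (sq_nonneg _) (sq_nonneg _)).mp hnorm
  exact Prod.ext (pow_eq_zero_iff two_ne_zero |>.mp hfst) (pow_eq_zero_iff two_ne_zero |>.mp hsnd)

theorem eq_zero_of_mem_rotatableLattice_of_fst_eq_zero (hrp : IsCoprime r p)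
    (hP : P ∈ rotatableLattice p q r) (hfst : P.1 = 0) (hsnd : |P.2| < r) : P = 0 := by
  have hdvd : r ∣ p * P.2 := by
    simpa [hfst] using (mem_rotatableLattice.mp hP).2
  exact Prod.ext hfst (Int.eq_zero_of_abs_lt_dvd (hrp.dvd_of_dvd_mul_left hdvd) hsnd)

end RotatableLattice

section Count

variable {p q : ℤ} {r : ℕ}

theorem card_latticePoints_rotatableLattice_le (hr : 0 < r) (hrp : IsCoprime (r : ℤ) p) (N : ℕ) :
    (latticePoints (rotatableLattice p q r) N).card ≤ (N + 1) * (N / r + 1) := by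
  simpa using card_latticePoints_le one_pos hr (fun P hP hfst hsnd =>
    eq_zero_of_mem_rotatableLattice_of_fst_eq_zero hrp hP
      (Int.abs_lt_one_iff.mp (by exact_mod_cast hfst)) hsnd) N

theorem card_latticePoints_rotatableLattice_le_sq {s : ℕ} (hs : 0 < s)
    (hsr : 2 * (s - 1) ^ 2 < r) (hrp : IsCoprime (r : ℤ) p) (N : ℕ) :
    (latticePoints (rotatableLattice p q r) N).card ≤ (N / s + 1) ^ 2 := by
  rw [sq]
  refine card_latticePoints_le hs hs (fun P hP hfst hsnd =>
    eq_zero_of_mem_rotatableLattice_of_sq_add_sq_lt hrp hP ?_) N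
  have hsr' : 2 * ((s : ℤ) - 1) ^ 2 < r := by
    zify [hs] at hsr
    exact hsr
  have hfst_sq : P.1 ^ 2 ≤ ((s : ℤ) - 1) ^ 2 :=
    sq_le_sq' (by linarith [(abs_lt.mp hfst).1]) (by linarith [(abs_lt.mp hfst).2])
  have hsnd_sq : P.2 ^ 2 ≤ ((s : ℤ) - 1) ^ 2 :=
    sq_le_sq' (by linarith [(abs_lt.mp hsnd).1]) (by linarith [(abs_lt.mp hsnd).2])
  linarith

theorem choose_two_card_latticePoints_rotatableLattice_le (hr : 0 < r)
    (hrp : IsCoprime (r : ℤ) p) (N : ℕ) :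
    (((latticePoints (rotatableLattice p q r) N).card.choose 2 : ℕ) : ℝ) ≤
      32 / (r : ℝ) ^ 2 * (N : ℝ) ^ 4 := by
  set c := (latticePoints (rotatableLattice p q r) N).card
  -- The least `s` with `r ≤ 2 * s ^ 2`.
  set s := Nat.sqrt ((r - 1) / 2) + 1 with hs
  have hlower : 2 * (s - 1) ^ 2 < r := by
    have := Nat.sqrt_le' ((r - 1) / 2)
    simp only [hs, Nat.add_sub_cancel]
    omega
  have hupper : r ≤ 2 * s ^ 2 := by
    have := Nat.lt_succ_sqrt' ((r - 1) / 2)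
    simp only [hs, Nat.succ_eq_add_one] at this ⊢
    omega
  have hc : c ≤ (N / s + 1) ^ 2 :=
    card_latticePoints_rotatableLattice_le_sq (Nat.succ_pos _) hlower hrp N
  rcases lt_or_ge N s with hNs | hsN
  · rw [Nat.div_eq_of_lt hNs] at hc
    rw [Nat.choose_eq_zero_of_lt (by omega), Nat.cast_zero]
    positivity
  · have hcr : c * r ≤ 8 * N ^ 2 := by
      have hdiv : (N / s + 1) * s ≤ 2 * N := by
        linarith [Nat.div_mul_le_self N s]
      calc c * r ≤ (N / s + 1) ^ 2 * (2 * s ^ 2) := Nat.mul_le_mul hc hupper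
        _ = 2 * ((N / s + 1) * s) ^ 2 := by ring
        _ ≤ 2 * (2 * N) ^ 2 := by gcongr
        _ = 8 * N ^ 2 := by ring
    have hcr' : (c : ℝ) ≤ 8 * (N : ℝ) ^ 2 / r := by
      rw [le_div_iff₀ (by exact_mod_cast hr)]
      exact_mod_cast hcr
    calc ((c.choose 2 : ℕ) : ℝ) ≤ (c : ℝ) ^ 2 / 2 := Nat.choose_le_pow_div 2 c
      _ ≤ (8 * (N : ℝ) ^ 2 / r) ^ 2 / 2 := by gcongr
      _ = 32 / (r : ℝ) ^ 2 * (N : ℝ) ^ 4 := by ring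

end Count

/-- An upper bound, relative to `N ^ 4`, for the number of unordered pairs of points of `[N] × [N]`
lying in the lattice of a primitive Pythagorean triple with hypotenuse `r`. The first argument of
`min` is sharp as `N → ∞`, the second is summable over all triples. -/
def pairDensityBound (N r : ℕ) : ℝ :=
  min (((1 + 1 / (N : ℝ)) * (1 / (r : ℝ) + 1 / (N : ℝ))) ^ 2 / 2) (32 / (r : ℝ) ^ 2)

theorem pairDensityBound_nonneg (N r : ℕ) : 0 ≤ pairDensityBound N r := by
  unfold pairDensityBound
  positivity

theorem pairDensityBound_le (N r : ℕ) : pairDensityBound N r ≤ 32 * (1 / (r : ℝ) ^ 2) :=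
  (min_le_right _ _).trans_eq (by ring)

theorem tendsto_pairDensityBound (r : ℕ) :
    Tendsto (fun N : ℕ => pairDensityBound N r) atTop (𝓝 (1 / (2 * (r : ℝ) ^ 2))) := by
  have hinv : Tendsto (fun N : ℕ => 1 / (N : ℝ)) atTop (𝓝 0) :=
    tendsto_one_div_atTop_nhds_zero_nat
  have hlim := ((((hinv.const_add 1).mul (hinv.const_add (1 / (r : ℝ)))).pow 2).div_const 2).min
    (tendsto_const_nhds (x := 32 / (r : ℝ) ^ 2))
  have hfirst : ((1 + 0) * (1 / (r : ℝ) + 0)) ^ 2 / 2 = 1 / (2 * (r : ℝ) ^ 2) := by ring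
  have hmin : 1 / (2 * (r : ℝ) ^ 2) ≤ 32 / (r : ℝ) ^ 2 := by
    rw [← div_div]
    gcongr
    norm_num
  rwa [hfirst, min_eq_left hmin] at hlim

theorem summable_pairDensityBound (N : ℕ) :
    Summable fun t : PPT => pairDensityBound N (t : ℕ × ℕ × ℕ).2.2 :=
  (summable_one_div_hypotenuse_sq.mul_left 32).of_nonneg_of_le
    (fun _ => pairDensityBound_nonneg _ _) fun _ => pairDensityBound_le _ _

theorem tendsto_tsum_pairDensityBound :
    Tendsto (fun N : ℕ => ∑' t : PPT, pairDensityBound N (t : ℕ × ℕ × ℕ).2.2) atTop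
      (𝓝 (∑' t : PPT, 1 / (2 * ((t : ℕ × ℕ × ℕ).2.2 : ℝ) ^ 2))) := by
  refine tendsto_tsum_of_dominated_convergence (summable_one_div_hypotenuse_sq.mul_left 32)
    (fun t => tendsto_pairDensityBound _) (Eventually.of_forall fun N t => ?_)
  rw [Real.norm_of_nonneg (pairDensityBound_nonneg _ _)]
  exact pairDensityBound_le _ _

theorem choose_two_card_latticePoints_le_pairDensityBound {p q : ℤ} {r N : ℕ} (hr : 0 < r)
    (hrp : IsCoprime (r : ℤ) p) (hN : 0 < N) :
    (((latticePoints (rotatableLattice p q r) N).card.choose 2 : ℕ) : ℝ) ≤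
      pairDensityBound N r * (N : ℝ) ^ 4 := by
  rw [pairDensityBound, min_mul_of_nonneg _ _ (by positivity)]
  refine le_min ?_ (choose_two_card_latticePoints_rotatableLattice_le hr hrp N)
  set c := (latticePoints (rotatableLattice p q r) N).card
  have hc : (c : ℝ) ≤ (N + 1) * ((N / r : ℕ) + 1) := by
    exact_mod_cast card_latticePoints_rotatableLattice_le hr hrp N
  calc ((c.choose 2 : ℕ) : ℝ) ≤ (c : ℝ) ^ 2 / 2 := Nat.choose_le_pow_div 2 c
    _ ≤ ((N + 1) * ((N : ℝ) / r + 1)) ^ 2 / 2 := by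
        gcongr
        exact hc.trans (by gcongr; exact Nat.cast_div_le)
    _ = ((1 + 1 / (N : ℝ)) * (1 / (r : ℝ) + 1 / (N : ℝ))) ^ 2 / 2 * (N : ℝ) ^ 4 := by
        field_simp

/-! ### Summation over the triples -/

/-- The two-element subsets of a finite set, as sets: the form in which `R` counts pairs. -/
def pairSets {α : Type*} (D : Finset α) : Finset (Set α) :=
  (D.powersetCard 2).map Finset.coeEmb.toEmbedding

theorem card_pairSets {α : Type*} (D : Finset α) : (pairSets D).card = D.card.choose 2 := by
  rw [pairSets, Finset.card_map, Finset.card_powersetCard]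

theorem pair_mem_pairSets {α : Type*} {D : Finset α} {a b : α} (hab : a ≠ b) (ha : a ∈ D)
    (hb : b ∈ D) : {a, b} ∈ pairSets D := by
  classical
  refine Finset.mem_map.mpr ⟨{a, b}, Finset.mem_powersetCard.mpr ⟨?_, Finset.card_pair hab⟩, ?_⟩
  · simp only [Finset.insert_subset_iff, Finset.singleton_subset_iff]
    exact ⟨ha, hb⟩
  · simp

theorem ncard_le_tsum {ι α : Type*} {S : Set α} {D : ι → Finset α} {f : ι → ℝ} (hS : S.Finite)
    (hcover : ∀ x ∈ S, ∃ i, x ∈ D i) (hf : Summable f) (hcard : ∀ i, ((D i).card : ℝ) ≤ f i) :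
    (S.ncard : ℝ) ≤ ∑' i, f i := by
  classical
  obtain ⟨I, hI, hSI⟩ := Set.finite_subset_iUnion hS (t := fun i => (D i : Set α))
    fun x hx => Set.mem_iUnion.mpr (hcover x hx)
  lift I to Finset ι using hI
  have hncard : S.ncard ≤ (I.biUnion D).card := by
    rw [← Set.ncard_coe_finset]
    exact Set.ncard_le_ncard (by simpa using hSI) (Finset.finite_toSet _)
  calc (S.ncard : ℝ) ≤ ∑ i ∈ I, ((D i).card : ℝ) := by
        exact_mod_cast hncard.trans Finset.card_biUnion_le
    _ ≤ ∑ i ∈ I, f i := Finset.sum_le_sum fun i _ => hcard i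
    _ ≤ ∑' i, f i := hf.sum_le_tsum I fun i _ => (Nat.cast_nonneg _).trans (hcard i)

theorem R_le_tsum {N : ℕ} (hN : 0 < N) :
    (R N : ℝ) ≤ ∑' t : PPT, pairDensityBound N (t : ℕ × ℕ × ℕ).2.2 * (N : ℝ) ^ 4 := by
  refine ncard_le_tsum (D := fun t : PPT =>
    pairSets (latticePoints (rotatableLattice t.1.1 t.1.2.1 t.1.2.2) N))
    ?_ ?_ ((summable_pairDensityBound N).mul_right _) ?_
  · refine (pairSets (gridFinset N)).finite_toSet.subset ?_
    rintro _ ⟨A, B, hAB, -, -, hA, hB, -, rfl⟩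
    exact pair_mem_pairSets hAB (mem_gridFinset.mpr hA) (mem_gridFinset.mpr hB)
  · rintro _ ⟨A, B, hAB, hA₀, -, hA, hB, htri, rfl⟩
    obtain ⟨p, q, r, hpqr, hAL, hBL⟩ := htri.exists_isPPT hA₀
    exact ⟨⟨(p, q, r), hpqr⟩, pair_mem_pairSets hAB (mem_latticePoints.mpr ⟨hA, hAL⟩)
      (mem_latticePoints.mpr ⟨hB, hBL⟩)⟩
  · rintro ⟨⟨p, q, r⟩, hpqr⟩
    rw [card_pairSets]
    exact choose_two_card_latticePoints_le_pairDensityBound hpqr.2.2.1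
      (IsPPT.isCoprime_hypotenuse_leg hpqr) hN

theorem R_div_pow_four_le_tsum {N : ℕ} (hN : 0 < N) :
    (R N : ℝ) / (N : ℝ) ^ 4 ≤ ∑' t : PPT, pairDensityBound N (t : ℕ × ℕ × ℕ).2.2 := by
  rw [div_le_iff₀ (by positivity), ← tsum_mul_right]
  exact R_le_tsum hN

theorem limsup_le_of_eventually_le_of_tendsto {ι : Type*} {l : Filter ι} [l.NeBot] {f g : ι → ℝ}
    {a : ℝ} (hf : ∀ i, 0 ≤ f i) (hfg : ∀ᶠ i in l, f i ≤ g i) (hg : Tendsto g l (𝓝 a)) :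
    limsup f l ≤ a := by
  rw [← hg.limsup_eq]
  exact limsup_le_limsup hfg (isBoundedUnder_of ⟨0, hf⟩).isCoboundedUnder_le hg.isBoundedUnder_le

/-- The number of rotatable triangles in `[N] × [N]` with a vertex at the origin is
asymptotically at most `(∑_{(p,q,r) ∈ 𝒫} 1/(2r²)) · N⁴ ≤ 0.0633 · N⁴`. -/
theorem rotatable_triangles_limsup :
    Filter.limsup (fun N : ℕ => (R N : ℝ) / (N : ℝ) ^ 4) Filter.atTop ≤
      ∑' t : PPT, 1 / (2 * ((t : ℕ × ℕ × ℕ).2.2 : ℝ) ^ 2) ∧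
    Filter.limsup (fun N : ℕ => (R N : ℝ) / (N : ℝ) ^ 4) Filter.atTop ≤ 0.0633 := by
  have hlimsup : Filter.limsup (fun N : ℕ => (R N : ℝ) / (N : ℝ) ^ 4) Filter.atTop ≤
      ∑' t : PPT, 1 / (2 * ((t : ℕ × ℕ × ℕ).2.2 : ℝ) ^ 2) :=
    limsup_le_of_eventually_le_of_tendsto (fun N => by positivity)
      ((eventually_gt_atTop 0).mono fun _ => R_div_pow_four_le_tsum) tendsto_tsum_pairDensityBound
  exact ⟨hlimsup, hlimsup.trans tsum_one_div_two_mul_hypotenuse_sq_le⟩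
end
end
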